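/- arXiv:1907.03629 — 4 statements merged into one kernel-verified Lean document; each statement's English description precedes it below -/
import Mathlib

section
/- Let V and W be real Banach spaces, T > 0, and let β, γ, ρ ∈ (0,1] satisfy β + γρ > 1. Let A : [0,T] × V → W satisfy ‖A‖_{β,γ} < ∞ and let Y : [0,T] → V satisfy ‖Y‖_{C^ρ} < ∞. Then for every 0 ≤ s ≤ t ≤ T there exists an element I(s,t) of W such that for every sequence of partitions of [s,t] whose mesh tends to 0, the associated Riemann sums Σ_{[u,v]∈Π} δA_{u,v}(Y_u) converge in W to I(s,t); in particular the limit exists and is independent of the sequence of partitions. (This limit is called the nonlinear Young integral ∫_s^t A_{dr}(Y_r).) -/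
open Filter Topology

/-- A partition of the interval `[s,t]`: a finite strictly increasing sequence
`s = r 0 < r 1 < … < r n = t` (for `n = 0` this is the trivial partition of `[s,s]`). -/
structure YoungPartition (s t : ℝ) where
  n : ℕ
  r : ℕ → ℝ
  strict : ∀ i, i < n → r i < r (i + 1)
  first : r 0 = s
  last : r n = t

/-- The mesh of a partition: the largest step `r (i+1) - r i`. -/
noncomputable def YoungPartition.mesh {s t : ℝ} (P : YoungPartition s t) : ℝ :=
  (((Finset.range P.n).sup fun i => (P.r (i + 1) - P.r i).toNNReal : NNReal) : ℝ)

/-- The Riemann sum `Σ_i δA_{r i, r (i+1)} (Y (r i))` associated to a partition,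
where `δA_{u,v}(x) = A v x - A u x`. -/
noncomputable def youngRiemannSum {E F : Type*} [NormedAddCommGroup E] [NormedAddCommGroup F]
    (A : ℝ → E → F) (Y : ℝ → E) {s t : ℝ} (P : YoungPartition s t) : F :=
  ∑ i ∈ Finset.range P.n, (A (P.r (i + 1)) (Y (P.r i)) - A (P.r i) (Y (P.r i)))

/-!
The germ `X u v = A v (Y u) - A u (Y u)` is almost additive: its defect at `u ≤ w ≤ v` is
`O((v - u) ^ (β + γ * ρ))`, an exponent larger than `1`. Splitting a finite sequence at the step
containing the midpoint of its range bounds the difference between `X` on the whole range and the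
Riemann sum, because the two remaining pieces have at most half the length and the resulting
geometric factor `2 ^ (1 - θ)` is less than `1`. Applied inside each interval of a partition, this
compares the Riemann sum of any partition with that of its common refinement with a second one.
Hence the Riemann sums form a Cauchy net as the mesh tends to `0`.
-/

/-- The two-parameter function `X` is almost additive of order `θ` on `S`: its additivity defect
is at most `C * (v - u) ^ θ`. This is the hypothesis of the sewing lemma. -/
def IsAlmostAdditiveOn {F : Type*} [NormedAddCommGroup F] (X : ℝ → ℝ → F) (C θ : ℝ)
    (S : Set ℝ) : Prop :=
  ∀ ⦃u⦄, u ∈ S → ∀ ⦃w⦄, w ∈ S → ∀ ⦃v⦄, v ∈ S → u ≤ w → w ≤ v →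
    ‖X u v - X u w - X w v‖ ≤ C * (v - u) ^ θ

/-- The constant of the sewing lemma, the solution `K` of `2 ^ (1 - θ) * K + 2 * C = K`. -/
noncomputable def sewingConst (C θ : ℝ) : ℝ := 2 * C / (1 - 2 ^ (1 - θ))

lemma one_sub_two_rpow_one_sub_pos {θ : ℝ} (hθ : 1 < θ) : 0 < 1 - (2 : ℝ) ^ (1 - θ) :=
  sub_pos.2 (Real.rpow_lt_one_of_one_lt_of_neg one_lt_two (by linarith))

lemma sewingConst_nonneg {C θ : ℝ} (hC : 0 ≤ C) (hθ : 1 < θ) : 0 ≤ sewingConst C θ :=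
  div_nonneg (by positivity) (one_sub_two_rpow_one_sub_pos hθ).le

lemma sewingConst_mul_rpow_eq {C θ h : ℝ} (hθ : 1 < θ) (hh : 0 ≤ h) :
    2 * (sewingConst C θ * (h / 2) ^ θ) + 2 * (C * h ^ θ) = sewingConst C θ * h ^ θ := by
  have halve : 2 * (h / 2) ^ θ = (2 : ℝ) ^ (1 - θ) * h ^ θ := by
    rw [Real.div_rpow hh zero_le_two, Real.rpow_sub two_pos, Real.rpow_one]
    ring
  have fixed : (2 : ℝ) ^ (1 - θ) * sewingConst C θ + 2 * C = sewingConst C θ := by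
    have := (one_sub_two_rpow_one_sub_pos hθ).ne'
    unfold sewingConst
    field_simp
    ring
  linear_combination sewingConst C θ * halve + h ^ θ * fixed

lemma exists_mem_Ico_le_le_succ {α : Type*} [LinearOrder α] {r : ℕ → α} {a b : ℕ} {m : α}
    (hab : a < b) (ha : r a ≤ m) (hb : m ≤ r b) :
    ∃ j ∈ Set.Ico a b, r j ≤ m ∧ m ≤ r (j + 1) := by
  induction b, hab using Nat.le_induction with
  | base => exact ⟨a, ⟨le_rfl, a.lt_succ_self⟩, ha, hb⟩
  | succ b hab ih =>
    rcases le_total (r b) m with h | h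
    · exact ⟨b, ⟨by omega, b.lt_succ_self⟩, h, hb⟩
    · obtain ⟨j, hj, hjm⟩ := ih h
      exact ⟨j, ⟨hj.1, hj.2.trans b.lt_succ_self⟩, hjm⟩

namespace IsAlmostAdditiveOn

variable {F : Type*} [NormedAddCommGroup F] {X : ℝ → ℝ → F} {C θ : ℝ} {S : Set ℝ}

lemma apply_self (hX : IsAlmostAdditiveOn X C θ S) (hθ : θ ≠ 0) {u : ℝ} (hu : u ∈ S) :
    X u u = 0 := by
  simpa [Real.zero_rpow hθ] using hX hu hu hu le_rfl le_rfl

lemma norm_sub_sub_sub_le (hX : IsAlmostAdditiveOn X C θ S) (hC : 0 ≤ C) (hθ : 0 ≤ θ)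
    {u w z v : ℝ} (hu : u ∈ S) (hw : w ∈ S) (hz : z ∈ S) (hv : v ∈ S)
    (huw : u ≤ w) (hwz : w ≤ z) (hzv : z ≤ v) :
    ‖X u v - X u w - X w z - X z v‖ ≤ 2 * (C * (v - u) ^ θ) := by
  have hwv : C * (v - w) ^ θ ≤ C * (v - u) ^ θ := by gcongr; linarith
  calc ‖X u v - X u w - X w z - X z v‖
      = ‖(X u v - X u w - X w v) + (X w v - X w z - X z v)‖ := by congr 1; abel
    _ ≤ C * (v - u) ^ θ + C * (v - w) ^ θ :=
        norm_add_le_of_le (hX hu hw hv huw (hwz.trans hzv)) (hX hw hz hv hwz hzv)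
    _ ≤ 2 * (C * (v - u) ^ θ) := by linarith

theorem norm_sum_Ico_sub_le (hX : IsAlmostAdditiveOn X C θ S) (hC : 0 ≤ C) (hθ : 1 < θ)
    {r : ℕ → ℝ} {a b : ℕ} (hab : a ≤ b) (hr : MonotoneOn r (Set.Icc a b))
    (hrS : Set.MapsTo r (Set.Icc a b) S) :
    ‖∑ i ∈ Finset.Ico a b, X (r i) (r (i + 1)) - X (r a) (r b)‖ ≤
      sewingConst C θ * (r b - r a) ^ θ := by
  induction hn : b - a using Nat.strong_induction_on generalizing a b with
  | _ n ih =>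
  subst hn
  obtain rfl | hab := hab.eq_or_lt
  · have hθ0 : θ ≠ 0 := by positivity
    simp [hX.apply_self hθ0 (hrS ⟨le_rfl, le_rfl⟩), Real.zero_rpow hθ0]
  have hrab : r a ≤ r b := hr (Set.left_mem_Icc.2 hab.le) (Set.right_mem_Icc.2 hab.le) hab.le
  obtain ⟨j, ⟨haj, hjb⟩, hjm, hmj⟩ := exists_mem_Ico_le_le_succ hab
    (show r a ≤ (r a + r b) / 2 by linarith) (show (r a + r b) / 2 ≤ r b by linarith)
  have piece {c d : ℕ} (hac : a ≤ c) (hcd : c ≤ d) (hdb : d ≤ b) (hlt : d - c < b - a)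
      (hhalf : r d - r c ≤ (r b - r a) / 2) :
      ‖∑ i ∈ Finset.Ico c d, X (r i) (r (i + 1)) - X (r c) (r d)‖ ≤
        sewingConst C θ * ((r b - r a) / 2) ^ θ := by
    have hsub : Set.Icc c d ⊆ Set.Icc a b := Set.Icc_subset_Icc hac hdb
    have hrcd : r c ≤ r d := hr ⟨hac, hcd.trans hdb⟩ ⟨hac.trans hcd, hdb⟩ hcd
    refine (ih _ hlt hcd (hr.mono hsub) (hrS.mono_left hsub) rfl).trans ?_
    have := sewingConst_nonneg hC hθ
    gcongr
  have left := piece le_rfl haj hjb.le (by omega) (by linarith)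
  have right := piece (by omega) hjb le_rfl (by omega) (by linarith)
  have middle : ‖X (r a) (r b) - X (r a) (r j) - X (r j) (r (j + 1)) - X (r (j + 1)) (r b)‖ ≤
      2 * (C * (r b - r a) ^ θ) :=
    hX.norm_sub_sub_sub_le hC (by linarith) (hrS ⟨le_rfl, hab.le⟩) (hrS ⟨haj, hjb.le⟩)
      (hrS ⟨by omega, hjb⟩) (hrS ⟨hab.le, le_rfl⟩) (hr ⟨le_rfl, hab.le⟩ ⟨haj, hjb.le⟩ haj)
      (hr ⟨haj, hjb.le⟩ ⟨by omega, hjb⟩ j.le_succ) (hr ⟨by omega, hjb⟩ ⟨hab.le, le_rfl⟩ hjb)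
  rw [← Finset.sum_Ico_consecutive _ haj hjb.le, Finset.sum_eq_sum_Ico_succ_bot hjb,
    ← sewingConst_mul_rpow_eq hθ (sub_nonneg.2 hrab), two_mul]
  refine le_trans (le_of_eq ?_) (norm_sub_le_of_le (norm_add_le_of_le left right) middle)
  congr 1
  abel

end IsAlmostAdditiveOn

section ClampIcc

variable {α : Type*} [LinearOrder α]

/-- The projection of `x` onto the interval `[a, b]`, as an element of the ambient order;
it agrees with `Set.projIcc` but does not ask for a proof of `a ≤ b`. -/
def clampIcc (a b x : α) : α := max a (min b x)

lemma clampIcc_monotone (a b : α) : Monotone (clampIcc a b) :=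
  fun _ _ h ↦ max_le_max_left a (min_le_min_left b h)

lemma clampIcc_mem_Icc {a b : α} (hab : a ≤ b) (x : α) : clampIcc a b x ∈ Set.Icc a b :=
  ⟨le_max_left _ _, max_le hab (min_le_left _ _)⟩

lemma clampIcc_of_le {a b x : α} (hx : x ≤ a) : clampIcc a b x = a :=
  max_eq_left ((min_le_right _ _).trans hx)

lemma clampIcc_of_ge {a b x : α} (hab : a ≤ b) (hx : b ≤ x) : clampIcc a b x = b := by
  rw [clampIcc, min_eq_left hx, max_eq_right hab]

/-- Both sides are the value of `X` on `[a, b] ∩ [c, d]` when these intervals meet, and `0`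
otherwise. -/
lemma apply_clampIcc_comm {M : Type*} [Zero M] {X : α → α → M} {S : Set α}
    (hX : ∀ x ∈ S, X x x = 0) {a b c d : α} (hab : a ≤ b) (hcd : c ≤ d)
    (ha : a ∈ S) (hb : b ∈ S) (hc : c ∈ S) (hd : d ∈ S) :
    X (clampIcc a b c) (clampIcc a b d) = X (clampIcc c d a) (clampIcc c d b) := by
  rcases le_total d a with hda | had
  · rw [clampIcc_of_le (hcd.trans hda), clampIcc_of_le hda, clampIcc_of_ge hcd hda,
      clampIcc_of_ge hcd (hda.trans hab), hX a ha, hX d hd]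
  rcases le_total b c with hbc | hcb
  · rw [clampIcc_of_ge hab hbc, clampIcc_of_ge hab (hbc.trans hcd),
      clampIcc_of_le (hab.trans hbc), clampIcc_of_le hbc, hX b hb, hX c hc]
  · unfold clampIcc
    rw [min_eq_right hcb, min_eq_right had, max_comm c a, min_comm d b,
      max_eq_right (le_min hab had), max_eq_right (le_min hcb hcd)]

end ClampIcc

namespace YoungPartition

variable {s t : ℝ}

lemma strictMonoOn (P : YoungPartition s t) : StrictMonoOn P.r (Set.Iic P.n) :=
  strictMonoOn_of_lt_add_one Set.ordConnected_Iic fun i _ _ hi ↦ P.strict i hi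

lemma r_mem_Icc (P : YoungPartition s t) {i : ℕ} (hi : i ≤ P.n) : P.r i ∈ Set.Icc s t := by
  constructor
  · simpa only [P.first] using P.strictMonoOn.monotoneOn (Nat.zero_le _) hi (Nat.zero_le i)
  · simpa only [P.last] using P.strictMonoOn.monotoneOn hi Set.self_mem_Iic hi

lemma sum_range_sub {G : Type*} [AddCommGroup G] (f : ℝ → G) (P : YoungPartition s t) :
    ∑ i ∈ Finset.range P.n, (f (P.r (i + 1)) - f (P.r i)) = f t - f s := by
  rw [Finset.sum_range_sub (fun i ↦ f (P.r i)), P.first, P.last]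

lemma mesh_nonneg (P : YoungPartition s t) : 0 ≤ P.mesh := NNReal.coe_nonneg _

lemma mesh_le_iff (P : YoungPartition s t) {ε : ℝ} (hε : 0 ≤ ε) :
    P.mesh ≤ ε ↔ ∀ i < P.n, P.r (i + 1) - P.r i ≤ ε := by
  lift ε to NNReal using hε
  simp [mesh, Real.toNNReal_le_iff_le_coe]

lemma sub_le_mesh (P : YoungPartition s t) {i : ℕ} (hi : i < P.n) :
    P.r (i + 1) - P.r i ≤ P.mesh :=
  (P.mesh_le_iff P.mesh_nonneg).1 le_rfl i hi

lemma exists_mesh_le (hst : s ≤ t) {ε : ℝ} (hε : 0 < ε) :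
    ∃ P : YoungPartition s t, P.mesh ≤ ε := by
  set n := ⌈(t - s) / ε⌉₊ with hn
  have hts : 0 ≤ t - s := sub_nonneg.2 hst
  have n_pos_iff : 0 < n ↔ 0 < t - s := by rw [hn, Nat.ceil_pos, div_pos_iff_of_pos_right hε]
  have step_le : (t - s) / n ≤ ε :=
    div_le_of_le_mul₀ n.cast_nonneg hε.le ((div_le_iff₀' hε).1 (Nat.le_ceil _))
  have n_mul_step : n * ((t - s) / n) = t - s := by
    refine mul_div_cancel_of_imp' fun h ↦ ?_
    rw [Nat.cast_eq_zero] at h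
    exact le_antisymm (not_lt.1 fun h_pos ↦ (n_pos_iff.2 h_pos).ne' h) hts
  refine ⟨⟨n, fun i ↦ s + i * ((t - s) / n), fun i hi ↦ ?_, by simp, by
    rw [n_mul_step, add_sub_cancel]⟩, (mesh_le_iff _ hε.le).2 fun i _ ↦ ?_⟩
  · have hn_pos : 0 < n := Nat.zero_lt_of_lt hi
    have := n_pos_iff.1 hn_pos
    gcongr
    exact i.lt_succ_self
  · push_cast
    linarith

/-- The filter of partitions of `[s, t]` whose mesh tends to `0`. -/
noncomputable def fine (s t : ℝ) : Filter (YoungPartition s t) := comap mesh (𝓝 0)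

lemma fine_neBot (hst : s ≤ t) : (fine s t).NeBot :=
  (Metric.nhds_basis_closedBall.comap mesh).neBot_iff.2 fun hε ↦
    (exists_mesh_le hst hε).imp fun P hP ↦ by
      simpa [abs_of_nonneg P.mesh_nonneg] using hP

/-- The Riemann sum of the germ `X` along `P`; taking `X u v = A v (Y u) - A u (Y u)` gives
`youngRiemannSum A Y P`. -/
def germSum {M : Type*} [AddCommMonoid M] (X : ℝ → ℝ → M) (P : YoungPartition s t) : M :=
  ∑ i ∈ Finset.range P.n, X (P.r i) (P.r (i + 1))

/-- The Riemann sum of `X` along the common refinement of `P` and `Q`, grouped by the intervals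
of `P`. The points of `Q` are projected onto each interval of `P`; this avoids sorting the union
of the two partitions, at the price of degenerate terms `X x x`. -/
noncomputable def refinedSum {M : Type*} [AddCommMonoid M] (X : ℝ → ℝ → M)
    (P Q : YoungPartition s t) : M :=
  ∑ i ∈ Finset.range P.n, ∑ j ∈ Finset.range Q.n,
    X (clampIcc (P.r i) (P.r (i + 1)) (Q.r j)) (clampIcc (P.r i) (P.r (i + 1)) (Q.r (j + 1)))

lemma refinedSum_comm {M : Type*} [AddCommMonoid M] {X : ℝ → ℝ → M}
    (hX : ∀ x ∈ Set.Icc s t, X x x = 0) (P Q : YoungPartition s t) :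
    refinedSum X P Q = refinedSum X Q P := by
  unfold refinedSum
  rw [Finset.sum_comm]
  refine Finset.sum_congr rfl fun j hj ↦ Finset.sum_congr rfl fun i hi ↦ ?_
  rw [Finset.mem_range] at hi hj
  exact apply_clampIcc_comm hX (P.strict i hi).le (Q.strict j hj).le (P.r_mem_Icc hi.le)
    (P.r_mem_Icc hi) (Q.r_mem_Icc hj.le) (Q.r_mem_Icc hj)

variable {F : Type*} [NormedAddCommGroup F] {X : ℝ → ℝ → F} {C θ : ℝ}

lemma norm_sum_clampIcc_sub_le (hX : IsAlmostAdditiveOn X C θ (Set.Icc s t)) (hC : 0 ≤ C)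
    (hθ : 1 < θ) (Q : YoungPartition s t) {u v : ℝ} (hsu : s ≤ u) (huv : u ≤ v) (hvt : v ≤ t) :
    ‖∑ j ∈ Finset.range Q.n, X (clampIcc u v (Q.r j)) (clampIcc u v (Q.r (j + 1))) - X u v‖ ≤
      sewingConst C θ * (v - u) ^ θ := by
  have hmono : MonotoneOn (clampIcc u v ∘ Q.r) (Set.Icc 0 Q.n) :=
    (clampIcc_monotone u v).comp_monotoneOn
      (Q.strictMonoOn.monotoneOn.mono Set.Icc_subset_Iic_self)
  have hmaps : Set.MapsTo (clampIcc u v ∘ Q.r) (Set.Icc 0 Q.n) (Set.Icc s t) :=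
    fun _ _ ↦ Set.Icc_subset_Icc hsu hvt (clampIcc_mem_Icc huv _)
  simpa only [Function.comp_apply, Q.first, Q.last, clampIcc_of_le hsu, clampIcc_of_ge huv hvt,
    ← Finset.range_eq_Ico] using hX.norm_sum_Ico_sub_le hC hθ (Nat.zero_le _) hmono hmaps

lemma sum_rpow_le (hθ : 1 ≤ θ) (P : YoungPartition s t) :
    ∑ i ∈ Finset.range P.n, (P.r (i + 1) - P.r i) ^ θ ≤ (t - s) * P.mesh ^ (θ - 1) := by
  rw [← P.sum_range_sub fun x ↦ x, Finset.sum_mul]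
  refine Finset.sum_le_sum fun i hi ↦ ?_
  rw [Finset.mem_range] at hi
  have step_pos : 0 < P.r (i + 1) - P.r i := sub_pos.2 (P.strict i hi)
  calc (P.r (i + 1) - P.r i) ^ θ
      = (P.r (i + 1) - P.r i) * (P.r (i + 1) - P.r i) ^ (θ - 1) := by
        rw [Real.rpow_sub_one step_pos.ne', mul_div_cancel₀ _ step_pos.ne']
    _ ≤ (P.r (i + 1) - P.r i) * P.mesh ^ (θ - 1) := by
        gcongr
        exact P.sub_le_mesh hi

lemma norm_refinedSum_sub_germSum_le (hX : IsAlmostAdditiveOn X C θ (Set.Icc s t)) (hC : 0 ≤ C)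
    (hθ : 1 < θ) (P Q : YoungPartition s t) :
    ‖refinedSum X P Q - germSum X P‖ ≤ sewingConst C θ * ((t - s) * P.mesh ^ (θ - 1)) := by
  rw [refinedSum, germSum, ← Finset.sum_sub_distrib]
  calc _ ≤ ∑ i ∈ Finset.range P.n, sewingConst C θ * (P.r (i + 1) - P.r i) ^ θ := by
        refine norm_sum_le_of_le _ fun i hi ↦ ?_
        rw [Finset.mem_range] at hi
        exact norm_sum_clampIcc_sub_le hX hC hθ Q (P.r_mem_Icc hi.le).1 (P.strict i hi).le
          (P.r_mem_Icc hi).2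
    _ ≤ sewingConst C θ * ((t - s) * P.mesh ^ (θ - 1)) := by
        rw [← Finset.mul_sum]
        exact mul_le_mul_of_nonneg_left (P.sum_rpow_le hθ.le) (sewingConst_nonneg hC hθ)

theorem dist_germSum_le (hX : IsAlmostAdditiveOn X C θ (Set.Icc s t)) (hC : 0 ≤ C)
    (hθ : 1 < θ) (P Q : YoungPartition s t) :
    dist (germSum X P) (germSum X Q) ≤
      sewingConst C θ * ((t - s) * P.mesh ^ (θ - 1)) +
        sewingConst C θ * ((t - s) * Q.mesh ^ (θ - 1)) := by
  have hP := norm_refinedSum_sub_germSum_le hX hC hθ P Q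
  have hQ := norm_refinedSum_sub_germSum_le hX hC hθ Q P
  rw [← dist_eq_norm, dist_comm] at hP
  rw [← refinedSum_comm (fun x hx ↦ hX.apply_self (by positivity) hx), ← dist_eq_norm] at hQ
  exact (dist_triangle _ _ _).trans (add_le_add hP hQ)

theorem exists_tendsto_germSum [CompleteSpace F] (hX : IsAlmostAdditiveOn X C θ (Set.Icc s t))
    (hC : 0 ≤ C) (hθ : 1 < θ) (hst : s ≤ t) :
    ∃ I : F, Tendsto (germSum X) (fine s t) (𝓝 I) := by
  have := fine_neBot hst
  have bound_tendsto : Tendsto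
      (fun P : YoungPartition s t ↦ sewingConst C θ * ((t - s) * P.mesh ^ (θ - 1)))
      (fine s t) (𝓝 0) := by
    have hmesh : Tendsto mesh (fine s t) (𝓝 0) := tendsto_comap
    have hpow := hmesh.rpow_const (p := θ - 1) (Or.inr (by linarith))
    rw [Real.zero_rpow (by linarith)] at hpow
    simpa only [mul_zero] using (hpow.const_mul (t - s)).const_mul (sewingConst C θ)
  refine cauchy_map_iff_exists_tendsto.1 (cauchy_map_iff'.2 ?_)
  rw [tendsto_uniformity_iff_dist_tendsto_zero]
  refine squeeze_zero (fun _ ↦ dist_nonneg) (fun PQ ↦ dist_germSum_le hX hC hθ PQ.1 PQ.2) ?_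
  simpa only [add_zero, Function.comp_apply] using
    (bound_tendsto.comp tendsto_fst).add (bound_tendsto.comp tendsto_snd)

end YoungPartition

section NonlinearYoung

variable {E F : Type*} [NormedAddCommGroup E] [NormedAddCommGroup F] {β γ ρ KA KY : ℝ}
  {A : ℝ → E → F} {Y : ℝ → E}

lemma isAlmostAdditiveOn_youngGerm {S : Set ℝ} (hβ : 0 ≤ β) (hγ : 0 ≤ γ) (hρ : 0 ≤ ρ)
    (hβγρ : β + γ * ρ ≠ 0)
    (hA : ∀ u ∈ S, ∀ v ∈ S, ∀ x y : E,
      ‖(A v x - A u x) - (A v y - A u y)‖ ≤ KA * |v - u| ^ β * ‖x - y‖ ^ γ)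
    (hY : ∀ u ∈ S, ∀ v ∈ S, ‖Y v - Y u‖ ≤ KY * |v - u| ^ ρ) :
    IsAlmostAdditiveOn (fun u v ↦ A v (Y u) - A u (Y u)) (|KA| * |KY| ^ γ) (β + γ * ρ) S := by
  intro u hu w hw v hv huw hwv
  have huv : 0 ≤ v - u := by linarith
  have abs_rpow_le {x p : ℝ} (hx : |x| ≤ v - u) (hp : 0 ≤ p) : |x| ^ p ≤ (v - u) ^ p :=
    Real.rpow_le_rpow (abs_nonneg x) hx hp
  have hwv_le : |v - w| ≤ v - u := by rw [abs_of_nonneg (by linarith)]; linarith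
  have huw_le : |u - w| ≤ v - u := by rw [abs_of_nonpos (by linarith)]; linarith
  have hYuw : ‖Y u - Y w‖ ≤ |KY| * (v - u) ^ ρ :=
    (hY w hw u hu).trans (mul_le_mul (le_abs_self _) (abs_rpow_le huw_le hρ)
      (by positivity) (by positivity))
  calc ‖A v (Y u) - A u (Y u) - (A w (Y u) - A u (Y u)) - (A v (Y w) - A w (Y w))‖
      = ‖(A v (Y u) - A w (Y u)) - (A v (Y w) - A w (Y w))‖ := by rw [sub_sub_sub_cancel_right]
    _ ≤ KA * |v - w| ^ β * ‖Y u - Y w‖ ^ γ := hA w hw v hv (Y u) (Y w)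
    _ ≤ |KA| * (v - u) ^ β * (|KY| * (v - u) ^ ρ) ^ γ := by
        gcongr
        exact le_abs_self KA
    _ = |KA| * |KY| ^ γ * (v - u) ^ (β + γ * ρ) := by
        rw [Real.mul_rpow (abs_nonneg _) (by positivity), ← Real.rpow_mul huv,
          Real.rpow_add' huv hβγρ, mul_comm ρ γ]
        ring

theorem nonlinearYoungIntegral_exists_general [CompleteSpace F] {s t : ℝ} (hst : s ≤ t)
    (hβ : 0 ≤ β) (hγ : 0 ≤ γ) (hρ : 0 ≤ ρ) (hβγρ : 1 < β + γ * ρ)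
    (hA : ∀ u ∈ Set.Icc s t, ∀ v ∈ Set.Icc s t, ∀ x y : E,
      ‖(A v x - A u x) - (A v y - A u y)‖ ≤ KA * |v - u| ^ β * ‖x - y‖ ^ γ)
    (hY : ∀ u ∈ Set.Icc s t, ∀ v ∈ Set.Icc s t, ‖Y v - Y u‖ ≤ KY * |v - u| ^ ρ) :
    ∃ I : F, Tendsto (youngRiemannSum A Y) (YoungPartition.fine s t) (𝓝 I) :=
  YoungPartition.exists_tendsto_germSum
    (isAlmostAdditiveOn_youngGerm hβ hγ hρ (by positivity) hA hY) (by positivity) hβγρ hst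

end NonlinearYoung

/-- **Existence of the nonlinear Young integral.**  If `‖A‖_{β,γ} ≤ KA` and
`‖Y‖_{C^ρ} ≤ KY` on `[0,T]` with `β + γρ > 1`, then for every `0 ≤ s ≤ t ≤ T` the Riemann sums
`Σ δA_{u,v}(Y_u)` converge, along any sequence of partitions of `[s,t]` whose mesh tends to `0`,
to a common limit `I(s,t) = ∫_s^t A_{dr}(Y_r)` independent of the chosen sequence. -/
theorem nonlinearYoungIntegral_exists
    {E F : Type*} [NormedAddCommGroup E] [NormedSpace ℝ E] [CompleteSpace E]
    [NormedAddCommGroup F] [NormedSpace ℝ F] [CompleteSpace F]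
    (T : ℝ) (hT : 0 < T) (β γ ρ : ℝ)
    (hβ : β ∈ Set.Ioc (0 : ℝ) 1) (hγ : γ ∈ Set.Ioc (0 : ℝ) 1) (hρ : ρ ∈ Set.Ioc (0 : ℝ) 1)
    (hβγρ : 1 < β + γ * ρ)
    (A : ℝ → E → F) (Y : ℝ → E) (KA KY : ℝ)
    (hA : ∀ s ∈ Set.Icc (0 : ℝ) T, ∀ t ∈ Set.Icc (0 : ℝ) T, ∀ x y : E,
      ‖(A t x - A s x) - (A t y - A s y)‖ ≤ KA * |t - s| ^ β * ‖x - y‖ ^ γ)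
    (hY : ∀ s ∈ Set.Icc (0 : ℝ) T, ∀ t ∈ Set.Icc (0 : ℝ) T, ‖Y t - Y s‖ ≤ KY * |t - s| ^ ρ)
    (s t : ℝ) (hs : 0 ≤ s) (hst : s ≤ t) (ht : t ≤ T) :
    ∃ I : F, ∀ P : ℕ → YoungPartition s t,
      Tendsto (fun k => (P k).mesh) atTop (𝓝 0) →
      Tendsto (fun k => youngRiemannSum A Y (P k)) atTop (𝓝 I) := by
  have hsub : Set.Icc s t ⊆ Set.Icc 0 T := Set.Icc_subset_Icc hs ht
  obtain ⟨I, hI⟩ := nonlinearYoungIntegral_exists_general hst hβ.1.le hγ.1.le hρ.1.le hβγρ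
    (fun u hu v hv ↦ hA u (hsub hu) v (hsub hv)) (fun u hu v hv ↦ hY u (hsub hu) v (hsub hv))
  exact ⟨I, fun _ hP ↦ hI.comp (tendsto_comap_iff.2 hP)⟩
end

section
/- Let V and W be real Banach spaces, T > 0, and let β, γ, ρ ∈ (0,1] satisfy β + γρ > 1. Let A : [0,T] × V → W satisfy ‖A‖_{β,γ} < ∞ and let Y : [0,T] → V satisfy ‖Y‖_{C^ρ} < ∞. Let I(s,t) ∈ W denote the limit of the Riemann sums Σ_{[u,v]∈Π} δA_{u,v}(Y_u) over partitions Π of [s,t] as the mesh tends to 0. Then there is a constant C, depending only on β, γ and ρ, such that for all 0 ≤ s ≤ t ≤ T one has ‖I(s,t) − δA_{s,t}(Y_s)‖_W ≤ C · ‖A‖_{β,γ} · ‖Y‖_{C^ρ}^γ · (t−s)^{β+γρ}. -/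
open Filter Topology

/-!
The Riemann sums are sums of the two-parameter germ `Ξ u v = A v (Y u) - A u (Y u)`, and inserting
a point `m` between `u` and `v` costs
`Ξ u v - Ξ u m - Ξ m v = δA_{m,v}(Y_u) - δA_{m,v}(Y_m)`,
which the Hölder bounds make of order `(v - u) ^ θ` with `θ = β + γ * ρ`. Halving all `2 ^ k` dyadic
intervals of `[s,t]` therefore changes the sum by `O(2 ^ k * (2 ^ (-k)) ^ θ)`, the term of a
geometric series which converges because `θ > 1`.
-/

theorem sum_range_two_mul {M : Type*} [AddCommMonoid M] (f : ℕ → M) (n : ℕ) :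
    ∑ i ∈ Finset.range (2 * n), f i =
      ∑ i ∈ Finset.range n, (f (2 * i) + f (2 * i + 1)) := by
  induction n with
  | zero => simp
  | succ n ih =>
    rw [Nat.mul_succ, Finset.sum_range_succ, Finset.sum_range_succ, Finset.sum_range_succ, ih,
      add_assoc]

theorem pow_mul_div_pow_rpow {b x : ℝ} (hb : 0 < b) (hx : 0 ≤ x) (θ : ℝ) (k : ℕ) :
    b ^ k * (x / b ^ k) ^ θ = x ^ θ * (b ^ (1 - θ)) ^ k := by
  rw [Real.div_rpow hx (by positivity), Real.rpow_sub hb, Real.rpow_one, div_pow,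
    Real.rpow_pow_comm hb.le]
  ring

theorem rpow_mul_one_sub_rpow_one_sub {b : ℝ} (hb : 0 < b) (θ : ℝ) :
    b ^ θ * (1 - b ^ (1 - θ)) = b ^ θ - b := by
  rw [mul_one_sub, ← Real.rpow_add hb, add_sub_cancel, Real.rpow_one]

section Dyadic

/-- The `i`-th point of the subdivision of `[s,t]` into `2 ^ k` intervals of equal length. -/
noncomputable def dyadicPoint (s t : ℝ) (k i : ℕ) : ℝ :=
  s + i * ((t - s) / 2 ^ k)

variable (s t : ℝ) (k i : ℕ)

theorem dyadicPoint_zero_right : dyadicPoint s t k 0 = s := by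
  simp [dyadicPoint]

theorem dyadicPoint_two_pow : dyadicPoint s t k (2 ^ k) = t := by
  simp [dyadicPoint, mul_div_cancel₀]

theorem dyadicPoint_add_one :
    dyadicPoint s t k (i + 1) = dyadicPoint s t k i + (t - s) / 2 ^ k := by
  simp only [dyadicPoint, Nat.cast_add_one]
  ring

theorem dyadicPoint_succ_two_mul :
    dyadicPoint s t (k + 1) (2 * i) = dyadicPoint s t k i := by
  simp only [dyadicPoint, Nat.cast_mul, Nat.cast_ofNat, pow_succ]
  ring

theorem dyadicPoint_succ_two_mul_add_one :
    dyadicPoint s t (k + 1) (2 * i + 1) =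
      (dyadicPoint s t k i + dyadicPoint s t k (i + 1)) / 2 := by
  rw [dyadicPoint_add_one, dyadicPoint_add_one, dyadicPoint_succ_two_mul, pow_succ]
  ring

variable {s t}

theorem monotone_dyadicPoint (hst : s ≤ t) : Monotone (dyadicPoint s t k) :=
  monotone_nat_of_le_succ fun i => by
    rw [dyadicPoint_add_one]
    exact le_add_of_nonneg_right (div_nonneg (sub_nonneg.2 hst) (by positivity))

end Dyadic

section Sewing

/-- The defect of additivity `δΞ_{u,m,v} = Ξ u v - Ξ u m - Ξ m v` of a two-parameter germ, the
quantity which the sewing lemma requires to be small. -/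
def sewingDefect {α F : Type*} [AddCommGroup F] (Ξ : α → α → F) (u m v : α) : F :=
  Ξ u v - Ξ u m - Ξ m v

/-- The Riemann sum of a germ over the subdivision of `[s,t]` into `2 ^ k` equal intervals. -/
noncomputable def dyadicSum {F : Type*} [AddCommMonoid F] (Ξ : ℝ → ℝ → F) (s t : ℝ) (k : ℕ) : F :=
  ∑ i ∈ Finset.range (2 ^ k), Ξ (dyadicPoint s t k i) (dyadicPoint s t k (i + 1))

theorem dyadicSum_zero {F : Type*} [AddCommMonoid F] (Ξ : ℝ → ℝ → F) (s t : ℝ) :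
    dyadicSum Ξ s t 0 = Ξ s t := by
  simp [dyadicSum, dyadicPoint]

theorem dyadicSum_sub_dyadicSum_succ {F : Type*} [AddCommGroup F] (Ξ : ℝ → ℝ → F) (s t : ℝ)
    (k : ℕ) :
    dyadicSum Ξ s t k - dyadicSum Ξ s t (k + 1) =
      ∑ i ∈ Finset.range (2 ^ k), sewingDefect Ξ (dyadicPoint s t k i)
        ((dyadicPoint s t k i + dyadicPoint s t k (i + 1)) / 2) (dyadicPoint s t k (i + 1)) := by
  have hlast (i : ℕ) : dyadicPoint s t (k + 1) (2 * i + 1 + 1) = dyadicPoint s t k (i + 1) :=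
    dyadicPoint_succ_two_mul s t k (i + 1)
  simp only [dyadicSum, sewingDefect, pow_succ' 2 k, sum_range_two_mul, hlast,
    dyadicPoint_succ_two_mul, dyadicPoint_succ_two_mul_add_one, ← Finset.sum_sub_distrib,
    sub_sub]

variable {F : Type*} [SeminormedAddCommGroup F] {Ξ : ℝ → ℝ → F} {s t K θ : ℝ}

theorem dist_dyadicSum_succ_le (hst : s ≤ t)
    (hΞ : ∀ u v, s ≤ u → u ≤ v → v ≤ t → ‖sewingDefect Ξ u ((u + v) / 2) v‖ ≤ K * (v - u) ^ θ)
    (k : ℕ) :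
    dist (dyadicSum Ξ s t k) (dyadicSum Ξ s t (k + 1)) ≤
      K * (t - s) ^ θ * (2 ^ (1 - θ)) ^ k := by
  have hdefect : ∀ i ∈ Finset.range (2 ^ k), ‖sewingDefect Ξ (dyadicPoint s t k i)
      ((dyadicPoint s t k i + dyadicPoint s t k (i + 1)) / 2) (dyadicPoint s t k (i + 1))‖ ≤
        K * ((t - s) / 2 ^ k) ^ θ := fun i hi => by
    have hmono := monotone_dyadicPoint k hst
    have hleft := hmono i.zero_le
    have hright := hmono (Finset.mem_range.1 hi)
    rw [dyadicPoint_zero_right] at hleft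
    rw [dyadicPoint_two_pow] at hright
    have hlength : dyadicPoint s t k (i + 1) - dyadicPoint s t k i = (t - s) / 2 ^ k := by
      rw [dyadicPoint_add_one, add_sub_cancel_left]
    exact hlength ▸ hΞ _ _ hleft (hmono i.le_succ) hright
  calc dist (dyadicSum Ξ s t k) (dyadicSum Ξ s t (k + 1))
      ≤ (Finset.range (2 ^ k)).card • (K * ((t - s) / 2 ^ k) ^ θ) := by
        rw [dist_eq_norm, dyadicSum_sub_dyadicSum_succ]
        exact (norm_sum_le _ _).trans (Finset.sum_le_card_nsmul _ _ _ hdefect)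
    _ = K * (2 ^ k * ((t - s) / 2 ^ k) ^ θ) := by
        rw [Finset.card_range, nsmul_eq_mul, Nat.cast_pow, Nat.cast_ofNat, mul_left_comm]
    _ = K * (t - s) ^ θ * (2 ^ (1 - θ)) ^ k := by
        rw [pow_mul_div_pow_rpow two_pos (sub_nonneg.2 hst), mul_assoc]

theorem norm_sub_le_of_tendsto_dyadicSum (hθ : 1 < θ) (hst : s ≤ t)
    (hΞ : ∀ u v, s ≤ u → u ≤ v → v ≤ t → ‖sewingDefect Ξ u ((u + v) / 2) v‖ ≤ K * (v - u) ^ θ)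
    {J : F} (hJ : Tendsto (dyadicSum Ξ s t) atTop (𝓝 J)) :
    ‖J - Ξ s t‖ ≤ K * (t - s) ^ θ / (1 - 2 ^ (1 - θ)) := by
  have hratio : (2 : ℝ) ^ (1 - θ) < 1 :=
    Real.rpow_lt_one_of_one_lt_of_neg one_lt_two (sub_neg.2 hθ)
  rw [← dist_eq_norm, dist_comm, ← dyadicSum_zero Ξ]
  exact dist_le_of_le_geometric_of_tendsto₀ _ _ hratio (dist_dyadicSum_succ_le hst hΞ) hJ

end Sewing

namespace YoungPartition

/-- The partition of a degenerate interval, with no steps. -/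
def refl (s : ℝ) : YoungPartition s s where
  n := 0
  r _ := s
  strict _ hi := absurd hi (Nat.not_lt_zero _)
  first := rfl
  last := rfl

theorem mesh_refl (s : ℝ) : (refl s).mesh = 0 := by
  simp [mesh, refl]

/-- The partition of `[s,t]` into `2 ^ k` intervals of equal length. -/
noncomputable def dyadic {s t : ℝ} (hst : s < t) (k : ℕ) : YoungPartition s t where
  n := 2 ^ k
  r := dyadicPoint s t k
  strict i _ := by
    rw [dyadicPoint_add_one]
    exact lt_add_of_pos_right _ (div_pos (sub_pos.2 hst) (by positivity))
  first := dyadicPoint_zero_right s t k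
  last := dyadicPoint_two_pow s t k

theorem mesh_dyadic {s t : ℝ} (hst : s < t) (k : ℕ) :
    (dyadic hst k).mesh = (t - s) / 2 ^ k := by
  have hnonempty : (Finset.range (2 ^ k)).Nonempty := Finset.nonempty_range_iff.2 (by positivity)
  have hlength : 0 ≤ (t - s) / 2 ^ k := div_nonneg (sub_pos.2 hst).le (by positivity)
  simp only [mesh, dyadic, dyadicPoint_add_one, add_sub_cancel_left, Finset.sup_const hnonempty,
    Real.coe_toNNReal _ hlength]

theorem tendsto_mesh_dyadic {s t : ℝ} (hst : s < t) :
    Tendsto (fun k => (dyadic hst k).mesh) atTop (𝓝 0) := by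
  simp only [mesh_dyadic]
  exact tendsto_const_nhds.div_atTop (tendsto_pow_atTop_atTop_of_one_lt one_lt_two)

end YoungPartition

section YoungGerm

/-- The germ `δA_{u,v}(Y_u)` whose Riemann sums define the nonlinear Young integral. -/
def youngGerm {α E F : Type*} [Sub F] (A : α → E → F) (Y : α → E) (u v : α) : F :=
  A v (Y u) - A u (Y u)

theorem sewingDefect_youngGerm {α E F : Type*} [AddCommGroup F] (A : α → E → F) (Y : α → E)
    (u m v : α) :
    sewingDefect (youngGerm A Y) u m v = (A v (Y u) - A m (Y u)) - (A v (Y m) - A m (Y m)) := by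
  simp only [sewingDefect, youngGerm]
  abel

theorem norm_sewingDefect_youngGerm_le {E F : Type*} [SeminormedAddCommGroup E]
    [SeminormedAddCommGroup F] {A : ℝ → E → F} {Y : ℝ → E} {β γ ρ KA KY u m v : ℝ}
    (hγ : 0 ≤ γ) (hKA : 0 ≤ KA) (hKY : 0 ≤ KY) (hum : u ≤ m) (hmv : m ≤ v)
    (hA : ∀ x y : E, ‖(A v x - A m x) - (A v y - A m y)‖ ≤ KA * |v - m| ^ β * ‖x - y‖ ^ γ)
    (hY : ‖Y m - Y u‖ ≤ KY * |m - u| ^ ρ) :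
    ‖sewingDefect (youngGerm A Y) u m v‖ ≤
      KA * KY ^ γ * ((v - m) ^ β * (m - u) ^ (γ * ρ)) := by
  have hmv₀ : 0 ≤ v - m := sub_nonneg.2 hmv
  have hum₀ : 0 ≤ m - u := sub_nonneg.2 hum
  rw [abs_of_nonneg hmv₀] at hA
  rw [abs_of_nonneg hum₀, norm_sub_rev] at hY
  calc ‖sewingDefect (youngGerm A Y) u m v‖
      ≤ KA * (v - m) ^ β * ‖Y u - Y m‖ ^ γ := by
        rw [sewingDefect_youngGerm]
        exact hA _ _
    _ ≤ KA * (v - m) ^ β * (KY * (m - u) ^ ρ) ^ γ := by gcongr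
    _ = KA * KY ^ γ * ((v - m) ^ β * (m - u) ^ (γ * ρ)) := by
        rw [Real.mul_rpow hKY (Real.rpow_nonneg hum₀ _), ← Real.rpow_mul hum₀, mul_comm ρ γ]
        ring

theorem norm_sewingDefect_youngGerm_midpoint_le {E F : Type*} [SeminormedAddCommGroup E]
    [SeminormedAddCommGroup F] {A : ℝ → E → F} {Y : ℝ → E} {β γ ρ KA KY s t : ℝ}
    (hγ : 0 ≤ γ) (hβγρ : β + γ * ρ ≠ 0) (hKA : 0 ≤ KA) (hKY : 0 ≤ KY)
    (hA : ∀ u ∈ Set.Icc s t, ∀ v ∈ Set.Icc s t, ∀ x y : E,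
      ‖(A v x - A u x) - (A v y - A u y)‖ ≤ KA * |v - u| ^ β * ‖x - y‖ ^ γ)
    (hY : ∀ u ∈ Set.Icc s t, ∀ v ∈ Set.Icc s t, ‖Y v - Y u‖ ≤ KY * |v - u| ^ ρ)
    (u v : ℝ) (hu : s ≤ u) (huv : u ≤ v) (hv : v ≤ t) :
    ‖sewingDefect (youngGerm A Y) u ((u + v) / 2) v‖ ≤
      KA * KY ^ γ / 2 ^ (β + γ * ρ) * (v - u) ^ (β + γ * ρ) := by
  have hm : (u + v) / 2 ∈ Set.Icc s t := ⟨by linarith, by linarith⟩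
  have hlength : 0 ≤ v - u := sub_nonneg.2 huv
  calc ‖sewingDefect (youngGerm A Y) u ((u + v) / 2) v‖
      ≤ KA * KY ^ γ * ((v - (u + v) / 2) ^ β * ((u + v) / 2 - u) ^ (γ * ρ)) :=
        norm_sewingDefect_youngGerm_le hγ hKA hKY (by linarith) (by linarith)
          (hA _ hm v ⟨hu.trans huv, hv⟩) (hY u ⟨hu, huv.trans hv⟩ _ hm)
    _ = KA * KY ^ γ * ((v - u) / 2) ^ (β + γ * ρ) := by
        rw [show v - (u + v) / 2 = (v - u) / 2 by ring, show (u + v) / 2 - u = (v - u) / 2 by ring,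
          Real.rpow_add' (div_nonneg hlength zero_le_two) hβγρ]
    _ = KA * KY ^ γ / 2 ^ (β + γ * ρ) * (v - u) ^ (β + γ * ρ) := by
        rw [Real.div_rpow hlength zero_le_two, mul_div_assoc', div_mul_eq_mul_div]

variable {E F : Type*} [NormedAddCommGroup E] [NormedAddCommGroup F] (A : ℝ → E → F) (Y : ℝ → E)

theorem youngRiemannSum_refl (s : ℝ) : youngRiemannSum A Y (YoungPartition.refl s) = 0 :=
  Finset.sum_range_zero _

theorem youngRiemannSum_dyadic {s t : ℝ} (hst : s < t) (k : ℕ) :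
    youngRiemannSum A Y (YoungPartition.dyadic hst k) = dyadicSum (youngGerm A Y) s t k :=
  rfl

end YoungGerm

theorem nonlinearYoungIntegral_bound_general
    {E F : Type*} [NormedAddCommGroup E] [NormedAddCommGroup F] {A : ℝ → E → F} {Y : ℝ → E}
    {β γ ρ KA KY s t : ℝ} (hγ : 0 ≤ γ) (hβγρ : 1 < β + γ * ρ) (hKA : 0 ≤ KA) (hKY : 0 ≤ KY)
    (hst : s ≤ t)
    (hA : ∀ u ∈ Set.Icc s t, ∀ v ∈ Set.Icc s t, ∀ x y : E,
      ‖(A v x - A u x) - (A v y - A u y)‖ ≤ KA * |v - u| ^ β * ‖x - y‖ ^ γ)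
    (hY : ∀ u ∈ Set.Icc s t, ∀ v ∈ Set.Icc s t, ‖Y v - Y u‖ ≤ KY * |v - u| ^ ρ)
    {J : F}
    (hJ : ∀ P : ℕ → YoungPartition s t, Tendsto (fun k => (P k).mesh) atTop (𝓝 0) →
      Tendsto (fun k => youngRiemannSum A Y (P k)) atTop (𝓝 J)) :
    ‖J - (A t (Y s) - A s (Y s))‖ ≤
      (2 ^ (β + γ * ρ) - 2)⁻¹ * KA * KY ^ γ * (t - s) ^ (β + γ * ρ) := by
  have hθ₀ : β + γ * ρ ≠ 0 := (zero_lt_one.trans hβγρ).ne'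
  rcases hst.eq_or_lt with rfl | hlt
  · have hJ₀ := hJ (fun _ => .refl s) (by simp only [YoungPartition.mesh_refl, tendsto_const_nhds])
    simp only [youngRiemannSum_refl, tendsto_const_nhds_iff] at hJ₀
    simp [← hJ₀, Real.zero_rpow hθ₀]
  have hlim : Tendsto (dyadicSum (youngGerm A Y) s t) atTop (𝓝 J) := by
    simpa only [youngRiemannSum_dyadic] using hJ _ (YoungPartition.tendsto_mesh_dyadic hlt)
  calc ‖J - (A t (Y s) - A s (Y s))‖
      ≤ KA * KY ^ γ / 2 ^ (β + γ * ρ) * (t - s) ^ (β + γ * ρ) / (1 - 2 ^ (1 - (β + γ * ρ))) :=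
        norm_sub_le_of_tendsto_dyadicSum hβγρ hst
          (norm_sewingDefect_youngGerm_midpoint_le hγ hθ₀ hKA hKY hA hY) hlim
    _ = (2 ^ (β + γ * ρ) - 2)⁻¹ * KA * KY ^ γ * (t - s) ^ (β + γ * ρ) := by
        rw [← rpow_mul_one_sub_rpow_one_sub two_pos, mul_inv]
        ring

/-- **Sewing bound for the nonlinear Young integral.**  There is a constant `C`, depending only
on `β`, `γ`, `ρ` (and the ambient spaces), such that whenever `‖A‖_{β,γ} ≤ KA`,
`‖Y‖_{C^ρ} ≤ KY` on `[0,T]`, and `I s t` denotes the limit of the Riemann sums over partitions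
of `[s,t]` as the mesh tends to `0`, one has
`‖I(s,t) − δA_{s,t}(Y_s)‖ ≤ C · KA · KY^γ · (t−s)^{β+γρ}` for all `0 ≤ s ≤ t ≤ T`. -/
theorem nonlinearYoungIntegral_bound
    {E F : Type*} [NormedAddCommGroup E] [NormedSpace ℝ E] [CompleteSpace E]
    [NormedAddCommGroup F] [NormedSpace ℝ F] [CompleteSpace F]
    (β γ ρ : ℝ)
    (hβ : β ∈ Set.Ioc (0 : ℝ) 1) (hγ : γ ∈ Set.Ioc (0 : ℝ) 1) (hρ : ρ ∈ Set.Ioc (0 : ℝ) 1)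
    (hβγρ : 1 < β + γ * ρ) :
    ∃ C : ℝ, ∀ T : ℝ, 0 < T →
      ∀ (A : ℝ → E → F) (Y : ℝ → E) (KA KY : ℝ), 0 ≤ KA → 0 ≤ KY →
      (∀ s ∈ Set.Icc (0 : ℝ) T, ∀ t ∈ Set.Icc (0 : ℝ) T, ∀ x y : E,
        ‖(A t x - A s x) - (A t y - A s y)‖ ≤ KA * |t - s| ^ β * ‖x - y‖ ^ γ) →
      (∀ s ∈ Set.Icc (0 : ℝ) T, ∀ t ∈ Set.Icc (0 : ℝ) T, ‖Y t - Y s‖ ≤ KY * |t - s| ^ ρ) →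
      ∀ I : ℝ → ℝ → F,
      (∀ s t : ℝ, 0 ≤ s → s ≤ t → t ≤ T → ∀ P : ℕ → YoungPartition s t,
        Tendsto (fun k => (P k).mesh) atTop (𝓝 0) →
        Tendsto (fun k => youngRiemannSum A Y (P k)) atTop (𝓝 (I s t))) →
      ∀ s t : ℝ, 0 ≤ s → s ≤ t → t ≤ T →
        ‖I s t - (A t (Y s) - A s (Y s))‖ ≤ C * KA * KY ^ γ * (t - s) ^ (β + γ * ρ) := by
  refine ⟨(2 ^ (β + γ * ρ) - 2)⁻¹, fun T _ A Y KA KY hKA hKY hA hY I hI s t hs hst ht => ?_⟩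
  have hsub : Set.Icc s t ⊆ Set.Icc 0 T := Set.Icc_subset_Icc hs ht
  exact nonlinearYoungIntegral_bound_general hγ.1.le hβγρ hKA hKY hst
    (fun u hu v hv => hA u (hsub hu) v (hsub hv)) (fun u hu v hv => hY u (hsub hu) v (hsub hv))
    (hI s t hs hst ht)
end

section
/- Let T > 0, d ≥ 1, β ∈ (1/2, 1], γ ∈ [0,1) with β(1+γ) > 1. Let A : [0,T] × ℝ^d → ℝ^d satisfy ‖A‖_{β,γ} < ∞ and M(A) := sup over s ≠ t in [0,T] and x ∈ ℝ^d of |δA_{s,t}(x)| / |t−s|^β < ∞. Then for every y_0 ∈ ℝ^d there exists a path Y : [0,T] → ℝ^d with ‖Y‖_{C^β} < ∞ and Y_0 = y_0 that solves the nonlinear Young differential equation Y_t = y_0 + ∫_0^t A_{ds}(Y_s), i.e. for every t ∈ [0,T] the Riemann sums Σ_{[u,v]∈Π} δA_{u,v}(Y_u) over partitions Π of [0,t] converge to Y_t − y_0 as the mesh tends to 0. Moreover there is a constant C depending only on β, γ, T, ‖A‖_{β,γ} and M(A) such that sup_{t∈[0,T]} |Y_t| + ‖Y‖_{C^β} ≤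 C(|y_0| + 1). -/
open Filter Topology

/-!
Along any time grid, the Euler scheme `y` for the equation has defect
`R_{s,t} = y_t - y_s - δA_{s,t}(y_s)` vanishing on consecutive grid points, and
`R_{s,t} - R_{s,u} - R_{u,t} = δA_{u,t}(y_u) - δA_{u,t}(y_s)` is of order
`|t-u|^β |u-s|^{βγ}`. Since `β(1+γ) > 1`, sewing bounds `R` by a multiple of `|t-s|^{β(1+γ)}`,
uniformly in the grid; the sublinearity of `N ↦ N^γ` lets the Hölder constant `N` of `y` be
recovered from this bound. By compactness the schemes converge pointwise along an ultrafilter, the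
defect bound survives in the limit, and a path with such a bound solves the equation, because its
defects along a partition of small mesh add up to something small.
-/

section DiscreteSewing

theorem exists_le_and_le_succ {α : Type*} [LinearOrder α] {t : ℕ → α} {i k : ℕ} (hik : i < k)
    {x : α} (hi : t i ≤ x) (hk : x ≤ t k) : ∃ j, i ≤ j ∧ j < k ∧ t j ≤ x ∧ x ≤ t (j + 1) := by
  induction k, hik using Nat.le_induction with
  | base => exact ⟨i, le_rfl, i.lt_succ_self, hi, hk⟩
  | succ k hik ih =>
    rcases le_total x (t k) with hx | hx
    · obtain ⟨j, hij, hjk, hj⟩ := ih hx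
      exact ⟨j, hij, hjk.trans k.lt_succ_self, hj⟩
    · exact ⟨k, (Nat.le_succ i).trans hik, k.lt_succ_self, hx, hk⟩

/-- The constant of the discrete sewing lemma with exponent `θ > 1`, namely the fixed point of
`c ↦ 2 * (1 / 2) ^ θ * c + 2` produced by halving a time interval. -/
noncomputable def sewingConstant (θ : ℝ) : ℝ :=
  2 / (1 - 2 * (1 / 2) ^ θ)

theorem two_mul_half_rpow_lt_one {θ : ℝ} (hθ : 1 < θ) : 2 * (1 / 2 : ℝ) ^ θ < 1 := by
  have h : (1 / 2 : ℝ) ^ θ < (1 / 2) ^ (1 : ℝ) :=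
    Real.rpow_lt_rpow_of_exponent_gt (by norm_num) (by norm_num) hθ
  rw [Real.rpow_one] at h
  linarith

theorem sewingConstant_nonneg {θ : ℝ} (hθ : 1 < θ) : 0 ≤ sewingConstant θ :=
  div_nonneg zero_le_two (sub_nonneg.2 (two_mul_half_rpow_lt_one hθ).le)

theorem two_mul_half_rpow_mul_sewingConstant_add_two {θ : ℝ} (hθ : 1 < θ) :
    2 * (1 / 2) ^ θ * sewingConstant θ + 2 = sewingConstant θ := by
  have h : 1 - 2 * (1 / 2 : ℝ) ^ θ ≠ 0 := (sub_pos.2 (two_mul_half_rpow_lt_one hθ)).ne'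
  unfold sewingConstant
  field_simp
  ring

theorem rpow_le_half_rpow_mul_rpow {a b θ : ℝ} (ha : 0 ≤ a) (hab : a ≤ b / 2) (hθ : 0 ≤ θ) :
    a ^ θ ≤ (1 / 2) ^ θ * b ^ θ := by
  rw [← Real.mul_rpow (by norm_num) (by linarith)]
  exact Real.rpow_le_rpow ha (by linarith) hθ

theorem discrete_sewing {E : Type*} [SeminormedAddCommGroup E] {R : ℕ → ℕ → E} {t : ℕ → ℝ}
    {θ C : ℝ} {n : ℕ} (ht : Monotone t) (hθ : 1 < θ) (hC : 0 ≤ C) (hself : ∀ i, R i i = 0)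
    (hsucc : ∀ i, R i (i + 1) = 0)
    (hR : ∀ i j k, i ≤ j → j < k → k ≤ n → ‖R i k - R i j - R j k‖ ≤ C * (t k - t i) ^ θ)
    {i k : ℕ} (hik : i ≤ k) (hkn : k ≤ n) :
    ‖R i k‖ ≤ sewingConstant θ * C * (t k - t i) ^ θ := by
  have hS := sewingConstant_nonneg hθ
  induction hm : k - i using Nat.strong_induction_on generalizing i k with
  | _ m ih =>
  have hD : 0 ≤ t k - t i := sub_nonneg.2 (ht hik)
  rcases hik.eq_or_lt with rfl | hlt
  · rw [hself, norm_zero]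
    positivity
  -- The grid step straddling the midpoint has no defect; on either side of it at most half of the
  -- interval is left.
  obtain ⟨j, hij, hjk, hj, hj'⟩ := exists_le_and_le_succ (t := t) (x := (t i + t k) / 2) hlt
    (by linarith) (by linarith)
  have hhalf {p q : ℕ} (hpq : p ≤ q) (hqn : q ≤ n) (hlen : q - p < m)
      (hle : t q - t p ≤ (t k - t i) / 2) :
      ‖R p q‖ ≤ sewingConstant θ * C * ((1 / 2) ^ θ * (t k - t i) ^ θ) := by
    refine (ih (q - p) hlen hpq hqn rfl).trans ?_
    gcongr
    exact rpow_le_half_rpow_mul_rpow (sub_nonneg.2 (ht hpq)) hle (by linarith)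
  have hleft := hhalf hij (by omega) (by omega) (by linarith)
  have hright := hhalf (p := j + 1) hjk hkn (by omega) (by linarith)
  have hstep : ‖R j k‖ ≤ C * (t k - t i) ^ θ + ‖R (j + 1) k‖ := by
    rcases (Nat.succ_le_of_lt hjk).eq_or_lt with rfl | hjk'
    · rw [hsucc, norm_zero]
      positivity
    · have h := hR j (j + 1) k j.le_succ hjk' hkn
      rw [hsucc, sub_zero] at h
      refine (norm_le_norm_sub_add _ _).trans (add_le_add_left (h.trans ?_) _)
      have := ht hij
      have := ht hjk.le
      gcongr
  have hsplit : ‖R i k‖ ≤ ‖R i k - R i j - R j k‖ + ‖R j k‖ + ‖R i j‖ := by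
    simpa only [sub_add_cancel] using
      norm_add₃_le (a := R i k - R i j - R j k) (b := R j k) (c := R i j)
  calc ‖R i k‖ ≤ (2 * (1 / 2) ^ θ * sewingConstant θ + 2) * C * (t k - t i) ^ θ := by
        linarith [hR i j k hij hjk hkn]
    _ = sewingConstant θ * C * (t k - t i) ^ θ := by
        rw [two_mul_half_rpow_mul_sewingConstant_add_two hθ]

end DiscreteSewing

/-- The error `z - x - δA_{s,t}(x)` made when `z` is predicted from `x` by one Euler step from
time `s` to time `t`. -/
def eulerDefect {E : Type*} [AddCommGroup E] (A : ℝ → E → E) (s t : ℝ) (x z : E) : E :=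
  z - x - (A t x - A s x)

theorem eulerDefect_self {E : Type*} [AddCommGroup E] (A : ℝ → E → E) (s : ℝ) (x : E) :
    eulerDefect A s s x x = 0 := by
  simp only [eulerDefect, sub_self]

theorem eulerDefect_sub_sub {E : Type*} [AddCommGroup E] (A : ℝ → E → E) (s u t : ℝ) (x w z : E) :
    eulerDefect A s t x z - eulerDefect A s u x w - eulerDefect A u t w z =
      (A t w - A u w) - (A t x - A u x) := by
  simp only [eulerDefect]
  abel

/-- `A` is a driving field on `[0,T]` with `‖A‖_{β,γ} ≤ K` and `M(A) ≤ M`. The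
bounds are multiplied out, so `s = t` and `x = y` need not be excluded. -/
structure IsYoungField {E F : Type*} [SeminormedAddCommGroup E] [SeminormedAddCommGroup F]
    (A : ℝ → E → F) (T β γ K M : ℝ) : Prop where
  norm_increment_sub_le : ∀ s ∈ Set.Icc 0 T, ∀ t ∈ Set.Icc 0 T, ∀ x y,
    ‖(A t x - A s x) - (A t y - A s y)‖ ≤ K * |t - s| ^ β * ‖x - y‖ ^ γ
  norm_increment_le : ∀ s ∈ Set.Icc 0 T, ∀ t ∈ Set.Icc 0 T, ∀ x, ‖A t x - A s x‖ ≤ M * |t - s| ^ β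

/-- `Y` solves the equation driven by `A` on `[0,T]` in the sense of Davie: its Euler defect over
`[s,t]` is at most `c (t-s)^θ`. For `θ > 1` this forces the Riemann sums to converge to the
increments of `Y`. -/
def IsDavieSolution {E : Type*} [SeminormedAddCommGroup E] (A : ℝ → E → E) (T θ c : ℝ)
    (Y : ℝ → E) : Prop :=
  ∀ ⦃s t : ℝ⦄, 0 ≤ s → s ≤ t → t ≤ T → ‖eulerDefect A s t (Y s) (Y t)‖ ≤ c * (t - s) ^ θ

namespace IsYoungField

section Increments

variable {E : Type*} [SeminormedAddCommGroup E] {A : ℝ → E → E} {T β γ K M : ℝ}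

theorem norm_eulerDefect_sub_sub_le (hA : IsYoungField A T β γ K M) (hβ : 0 ≤ β) (hγ : 0 ≤ γ)
    (hK : 0 ≤ K) {N : ℝ} (hN : 0 ≤ N) {s u t : ℝ} (hs : 0 ≤ s) (hsu : s ≤ u) (hut : u ≤ t)
    (ht : t ≤ T) {x w : E} (z : E) (hxw : ‖w - x‖ ≤ N * (u - s) ^ β) :
    ‖eulerDefect A s t x z - eulerDefect A s u x w - eulerDefect A u t w z‖ ≤
      K * N ^ γ * (t - s) ^ (β * (1 + γ)) := by
  have hts : 0 ≤ t - s := by linarith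
  have htu : 0 ≤ t - u := by linarith
  calc ‖eulerDefect A s t x z - eulerDefect A s u x w - eulerDefect A u t w z‖
      ≤ K * (t - u) ^ β * ‖w - x‖ ^ γ := by
        rw [eulerDefect_sub_sub, ← abs_of_nonneg htu]
        exact hA.norm_increment_sub_le u ⟨by linarith, by linarith⟩ t ⟨by linarith, ht⟩ w x
    _ ≤ K * (t - s) ^ β * (N * (t - s) ^ β) ^ γ := by
        have : ‖w - x‖ ≤ N * (t - s) ^ β := hxw.trans <| by
          have := sub_nonneg.2 hsu
          gcongr
        gcongr
    _ = K * N ^ γ * (t - s) ^ (β * (1 + γ)) := by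
        rw [Real.mul_rpow hN (by positivity), ← Real.rpow_mul hts, mul_add, mul_one,
          Real.rpow_add_of_nonneg hts hβ (by positivity)]
        ring

theorem norm_sub_le_of_norm_eulerDefect_le (hA : IsYoungField A T β γ K M) (hβ : 0 ≤ β)
    (hγ : 0 ≤ γ) {c : ℝ} (hc : 0 ≤ c) {s t : ℝ} (hs : 0 ≤ s) (hst : s ≤ t) (ht : t ≤ T)
    {x z : E} (hxz : ‖eulerDefect A s t x z‖ ≤ c * (t - s) ^ (β * (1 + γ))) :
    ‖z - x‖ ≤ (M + c * T ^ (β * γ)) * (t - s) ^ β := by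
  have hts : 0 ≤ t - s := by linarith
  have hincr : ‖A t x - A s x‖ ≤ M * (t - s) ^ β := by
    rw [← abs_of_nonneg hts]
    exact hA.norm_increment_le s ⟨hs, by linarith⟩ t ⟨by linarith, ht⟩ x
  calc ‖z - x‖ ≤ ‖eulerDefect A s t x z‖ + ‖A t x - A s x‖ := norm_le_norm_sub_add _ _
    _ ≤ c * ((t - s) ^ (β * γ) * (t - s) ^ β) + M * (t - s) ^ β := by
        rw [← Real.rpow_add_of_nonneg hts (by positivity) hβ, ← mul_add_one, add_comm γ]
        gcongr
    _ ≤ c * (T ^ (β * γ) * (t - s) ^ β) + M * (t - s) ^ β := by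
        gcongr
        linarith
    _ = (M + c * T ^ (β * γ)) * (t - s) ^ β := by ring

theorem norm_sub_le_of_isDavieSolution (hA : IsYoungField A T β γ K M) (hβ : 0 ≤ β) (hγ : 0 ≤ γ)
    {c : ℝ} (hc : 0 ≤ c) {Y : ℝ → E} (hY : IsDavieSolution A T (β * (1 + γ)) c Y) {s t : ℝ}
    (hs : s ∈ Set.Icc 0 T) (ht : t ∈ Set.Icc 0 T) :
    ‖Y t - Y s‖ ≤ (M + c * T ^ (β * γ)) * |t - s| ^ β := by
  wlog hst : s ≤ t generalizing s t
  · rw [norm_sub_rev, abs_sub_comm]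
    exact this ht hs (le_of_not_ge hst)
  rw [abs_of_nonneg (sub_nonneg.2 hst)]
  exact hA.norm_sub_le_of_norm_eulerDefect_le hβ hγ hc hs.1 hst ht.2 (hY hs.1 hst ht.2)

end Increments

section Continuity

variable {E F : Type*} [SeminormedAddCommGroup E] [SeminormedAddCommGroup F] {A : ℝ → E → F}
  {T β γ K M : ℝ} {ι : Type*} {l : Filter ι}

theorem tendsto_increment (hA : IsYoungField A T β γ K M) (hβ : 0 < β) (hγ : 0 < γ) {r t : ℝ}
    (hr : r ∈ Set.Icc 0 T) (ht : t ∈ Set.Icc 0 T) {τ : ι → ℝ} (hτT : ∀ n, τ n ∈ Set.Icc 0 T)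
    (hτ : Tendsto τ l (𝓝 t)) {x : ι → E} {x₀ : E} (hx : Tendsto x l (𝓝 x₀)) :
    Tendsto (fun n => A (τ n) (x n) - A r (x n)) l (𝓝 (A t x₀ - A r x₀)) := by
  have htime : Tendsto (fun n => A (τ n) (x n) - A t (x n)) l (𝓝 0) := by
    have h : Tendsto (fun n => M * |τ n - t| ^ β) l (𝓝 0) := by
      simpa [hβ.ne'] using
        ((hτ.sub_const t).abs.rpow_const (p := β) (Or.inr hβ.le)).const_mul M
    exact squeeze_zero_norm (fun n => hA.norm_increment_le t ht (τ n) (hτT n) (x n)) h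
  have hspace : Tendsto (fun n => (A t (x n) - A r (x n)) - (A t x₀ - A r x₀)) l (𝓝 0) := by
    have h : Tendsto (fun n => K * |t - r| ^ β * ‖x n - x₀‖ ^ γ) l (𝓝 0) := by
      simpa [hγ.ne'] using
        ((hx.sub_const x₀).norm.rpow_const (p := γ) (Or.inr hγ.le)).const_mul (K * |t - r| ^ β)
    exact squeeze_zero_norm (fun n => hA.norm_increment_sub_le r hr t ht (x n) x₀) h
  rw [← tendsto_sub_nhds_zero_iff]
  simpa only [add_zero, ← add_sub_assoc, sub_add_cancel] using htime.add hspace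

end Continuity

theorem tendsto_eulerDefect {E : Type*} [SeminormedAddCommGroup E] {A : ℝ → E → E}
    {T β γ K M : ℝ} {ι : Type*} {l : Filter ι} (hA : IsYoungField A T β γ K M) (hβ : 0 < β)
    (hγ : 0 < γ) {s t : ℝ} (hs : s ∈ Set.Icc 0 T) (ht : t ∈ Set.Icc 0 T) {σ τ : ι → ℝ}
    (hσT : ∀ n, σ n ∈ Set.Icc 0 T) (hτT : ∀ n, τ n ∈ Set.Icc 0 T) (hσ : Tendsto σ l (𝓝 s))
    (hτ : Tendsto τ l (𝓝 t)) {x z : ι → E} {x₀ z₀ : E} (hx : Tendsto x l (𝓝 x₀))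
    (hz : Tendsto z l (𝓝 z₀)) :
    Tendsto (fun n => eulerDefect A (σ n) (τ n) (x n) (z n)) l (𝓝 (eulerDefect A s t x₀ z₀)) := by
  have h := (hA.tendsto_increment hβ hγ hs ht hτT hτ hx).sub
    (hA.tendsto_increment hβ hγ hs hs hσT hσ hx)
  simp only [sub_sub_sub_cancel_right] at h
  exact (hz.sub hx).sub h

end IsYoungField

section EulerScheme

/-- The Euler scheme started at `y₀` along the time grid `t`. -/
def eulerScheme {E : Type*} [AddCommGroup E] (A : ℝ → E → E) (y₀ : E) (t : ℕ → ℝ) : ℕ → E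
  | 0 => y₀
  | i + 1 => eulerScheme A y₀ t i +
      (A (t (i + 1)) (eulerScheme A y₀ t i) - A (t i) (eulerScheme A y₀ t i))

theorem eulerDefect_eulerScheme_succ {E : Type*} [AddCommGroup E] (A : ℝ → E → E) (y₀ : E)
    (t : ℕ → ℝ) (i : ℕ) :
    eulerDefect A (t i) (t (i + 1)) (eulerScheme A y₀ t i) (eulerScheme A y₀ t (i + 1)) = 0 := by
  simp only [eulerDefect, eulerScheme, add_sub_cancel_left, sub_self]

variable {E : Type*} [SeminormedAddCommGroup E] {A : ℝ → E → E} {T β γ K M N : ℝ} {t : ℕ → ℝ}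

theorem IsYoungField.norm_eulerDefect_eulerScheme_le_of_forall_lt (hA : IsYoungField A T β γ K M)
    (hβ : 0 ≤ β) (hγ : 0 ≤ γ) (hβγ : 1 < β * (1 + γ)) (hK : 0 ≤ K) (hN : 0 ≤ N) (y₀ : E)
    (ht : Monotone t) (ht0 : 0 ≤ t 0) {k : ℕ} (htk : t k ≤ T)
    (hincr : ∀ j < k, ∀ i ≤ j,
      ‖eulerScheme A y₀ t j - eulerScheme A y₀ t i‖ ≤ N * (t j - t i) ^ β)
    {i : ℕ} (hik : i ≤ k) :
    ‖eulerDefect A (t i) (t k) (eulerScheme A y₀ t i) (eulerScheme A y₀ t k)‖ ≤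
      sewingConstant (β * (1 + γ)) * (K * N ^ γ) * (t k - t i) ^ (β * (1 + γ)) := by
  refine discrete_sewing
    (R := fun i k => eulerDefect A (t i) (t k) (eulerScheme A y₀ t i) (eulerScheme A y₀ t k))
    ht hβγ (by positivity) (fun i => eulerDefect_self A _ _)
    (eulerDefect_eulerScheme_succ A y₀ t) (fun i j l hij hjl hlk => ?_) hik le_rfl
  exact hA.norm_eulerDefect_sub_sub_le hβ hγ hK hN (ht0.trans (ht i.zero_le)) (ht hij) (ht hjl.le)
    ((ht hlk).trans htk) _ (hincr j (hjl.trans_le hlk) i hij)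

theorem IsYoungField.norm_eulerScheme_sub_le (hA : IsYoungField A T β γ K M) (hβ : 0 ≤ β)
    (hγ : 0 ≤ γ) (hβγ : 1 < β * (1 + γ)) (hK : 0 ≤ K) (hN : 0 ≤ N)
    (hMN : M + sewingConstant (β * (1 + γ)) * (K * N ^ γ) * T ^ (β * γ) ≤ N) (y₀ : E)
    (ht : Monotone t) (ht0 : 0 ≤ t 0) {i k : ℕ} (hik : i ≤ k) (htk : t k ≤ T) :
    ‖eulerScheme A y₀ t k - eulerScheme A y₀ t i‖ ≤ N * (t k - t i) ^ β := by
  induction k using Nat.strong_induction_on generalizing i with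
  | _ k ih =>
  have hdefect := hA.norm_eulerDefect_eulerScheme_le_of_forall_lt hβ hγ hβγ hK hN y₀ ht ht0 htk
    (fun j hj i hij => ih j hj hij ((ht hj.le).trans htk)) hik
  have hS := sewingConstant_nonneg hβγ
  have hki : 0 ≤ t k - t i := sub_nonneg.2 (ht hik)
  refine (hA.norm_sub_le_of_norm_eulerDefect_le hβ hγ (by positivity)
    (ht0.trans (ht i.zero_le)) (ht hik) htk hdefect).trans ?_
  gcongr

theorem IsYoungField.norm_eulerDefect_eulerScheme_le (hA : IsYoungField A T β γ K M) (hβ : 0 ≤ β)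
    (hγ : 0 ≤ γ) (hβγ : 1 < β * (1 + γ)) (hK : 0 ≤ K) (hN : 0 ≤ N)
    (hMN : M + sewingConstant (β * (1 + γ)) * (K * N ^ γ) * T ^ (β * γ) ≤ N) (y₀ : E)
    (ht : Monotone t) (ht0 : 0 ≤ t 0) {i k : ℕ} (hik : i ≤ k) (htk : t k ≤ T) :
    ‖eulerDefect A (t i) (t k) (eulerScheme A y₀ t i) (eulerScheme A y₀ t k)‖ ≤
      sewingConstant (β * (1 + γ)) * (K * N ^ γ) * (t k - t i) ^ (β * (1 + γ)) :=
  hA.norm_eulerDefect_eulerScheme_le_of_forall_lt hβ hγ hβγ hK hN y₀ ht ht0 htk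
    (fun _ hj _ hij =>
      hA.norm_eulerScheme_sub_le hβ hγ hβγ hK hN hMN y₀ ht ht0 hij ((ht hj.le).trans htk)) hik

end EulerScheme

section UniformGrid

/-- The times `i / n`. For `n = 0` all of them are `0`, so this is monotone for every `n`. -/
noncomputable def uniformGrid (n i : ℕ) : ℝ :=
  i / n

theorem uniformGrid_zero (n : ℕ) : uniformGrid n 0 = 0 := by
  simp only [uniformGrid, Nat.cast_zero, zero_div]

theorem monotone_uniformGrid (n : ℕ) : Monotone (uniformGrid n) := fun i j hij => by
  unfold uniformGrid
  gcongr

theorem uniformGrid_nonneg (n i : ℕ) : 0 ≤ uniformGrid n i :=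
  div_nonneg i.cast_nonneg n.cast_nonneg

theorem uniformGrid_floor_le (n : ℕ) {t : ℝ} (ht : 0 ≤ t) : uniformGrid n ⌊t * n⌋₊ ≤ t :=
  div_le_of_le_mul₀ n.cast_nonneg ht (Nat.floor_le (by positivity))

theorem tendsto_uniformGrid_floor {t : ℝ} (ht : 0 ≤ t) :
    Tendsto (fun n => uniformGrid n ⌊t * n⌋₊) atTop (𝓝 t) :=
  (tendsto_nat_floor_mul_div_atTop ht).comp tendsto_natCast_atTop_atTop

end UniformGrid

section Existence

theorem IsYoungField.exists_tendsto_eulerScheme {E : Type*} [SeminormedAddCommGroup E]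
    [ProperSpace E] {A : ℝ → E → E} {T β γ K M N : ℝ} (hA : IsYoungField A T β γ K M) (hβ : 0 ≤ β)
    (hγ : 0 ≤ γ) (hβγ : 1 < β * (1 + γ)) (hK : 0 ≤ K) (hN : 0 ≤ N)
    (hMN : M + sewingConstant (β * (1 + γ)) * (K * N ^ γ) * T ^ (β * γ) ≤ N) (y₀ : E)
    (U : Ultrafilter ℕ) {t : ℝ} (ht : t ∈ Set.Icc 0 T) :
    ∃ z, Tendsto (fun n => eulerScheme A y₀ (uniformGrid n) ⌊t * n⌋₊) U (𝓝 z) := by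
  have hbdd (n : ℕ) : eulerScheme A y₀ (uniformGrid n) ⌊t * n⌋₊ ∈
      Metric.closedBall y₀ (N * T ^ β) := by
    have hfloor := (uniformGrid_floor_le n ht.1).trans ht.2
    have h := hA.norm_eulerScheme_sub_le hβ hγ hβγ hK hN hMN y₀ (monotone_uniformGrid n)
      (uniformGrid_nonneg n 0) (Nat.zero_le _) hfloor
    rw [uniformGrid_zero, sub_zero] at h
    rw [mem_closedBall_iff_norm]
    refine h.trans ?_
    have := uniformGrid_nonneg n ⌊t * n⌋₊
    gcongr
  obtain ⟨z, -, hz⟩ := (isCompact_closedBall y₀ (N * T ^ β)).ultrafilter_le_nhds'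
    (U.map fun n => eulerScheme A y₀ (uniformGrid n) ⌊t * n⌋₊)
    (Ultrafilter.mem_map.2 (univ_mem' hbdd))
  exact ⟨z, hz⟩

theorem IsYoungField.exists_isDavieSolution {E : Type*} [NormedAddCommGroup E] [ProperSpace E]
    {A : ℝ → E → E} {T β γ K M N : ℝ} (hA : IsYoungField A T β γ K M) (hT : 0 ≤ T)
    (hβ : 0 < β) (hγ : 0 < γ) (hβγ : 1 < β * (1 + γ)) (hK : 0 ≤ K) (hN : 0 ≤ N)
    (hMN : M + sewingConstant (β * (1 + γ)) * (K * N ^ γ) * T ^ (β * γ) ≤ N) (y₀ : E) :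
    ∃ Y, Y 0 = y₀ ∧
      IsDavieSolution A T (β * (1 + γ)) (sewingConstant (β * (1 + γ)) * (K * N ^ γ)) Y := by
  have hlim : ∀ t ∈ Set.Icc 0 T, ∃ z,
      Tendsto (fun n => eulerScheme A y₀ (uniformGrid n) ⌊t * n⌋₊) (hyperfilter ℕ) (𝓝 z) :=
    fun _ ht => hA.exists_tendsto_eulerScheme hβ.le hγ.le hβγ hK hN hMN y₀ _ ht
  choose! Y hY using hlim
  have hgrid {t : ℝ} (ht : 0 ≤ t) :
      Tendsto (fun n => uniformGrid n ⌊t * n⌋₊) (hyperfilter ℕ) (𝓝 t) :=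
    (tendsto_uniformGrid_floor ht).mono_left Nat.hyperfilter_le_atTop
  have hgridT {t : ℝ} (ht : t ∈ Set.Icc 0 T) (n : ℕ) : uniformGrid n ⌊t * n⌋₊ ∈ Set.Icc 0 T :=
    ⟨uniformGrid_nonneg n _, (uniformGrid_floor_le n ht.1).trans ht.2⟩
  refine ⟨Y, ?_, fun s t hs hst ht => ?_⟩
  · have h0 := hY 0 ⟨le_rfl, hT⟩
    simp only [zero_mul, Nat.floor_zero, eulerScheme] at h0
    exact tendsto_nhds_unique h0 tendsto_const_nhds
  · have hsT : s ∈ Set.Icc 0 T := ⟨hs, hst.trans ht⟩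
    have htT : t ∈ Set.Icc 0 T := ⟨hs.trans hst, ht⟩
    have hdefect := hA.tendsto_eulerDefect hβ hγ hsT htT (hgridT hsT) (hgridT htT) (hgrid hsT.1)
      (hgrid htT.1) (hY s hsT) (hY t htT)
    have hbound := (((hgrid htT.1).sub (hgrid hsT.1)).rpow_const (p := β * (1 + γ))
      (Or.inr (by positivity))).const_mul (sewingConstant (β * (1 + γ)) * (K * N ^ γ))
    refine le_of_tendsto_of_tendsto' hdefect.norm hbound fun n => ?_
    exact hA.norm_eulerDefect_eulerScheme_le hβ.le hγ.le hβγ hK hN hMN y₀ (monotone_uniformGrid n)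
      (uniformGrid_nonneg n 0) (by gcongr) (hgridT htT n).2

end Existence

section RiemannSums

namespace YoungPartition

variable {s t : ℝ} (P : YoungPartition s t)

theorem monotoneOn_r : MonotoneOn P.r (Set.Iic P.n) :=
  monotoneOn_of_le_add_one Set.ordConnected_Iic fun i _ _ hi => (P.strict i hi).le

theorem le_r {i : ℕ} (hi : i ≤ P.n) : s ≤ P.r i := by
  conv_lhs => rw [← P.first]
  exact P.monotoneOn_r (Set.mem_Iic.2 P.n.zero_le) hi i.zero_le

theorem r_le {i : ℕ} (hi : i ≤ P.n) : P.r i ≤ t := by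
  conv_rhs => rw [← P.last]
  exact P.monotoneOn_r hi (Set.mem_Iic.2 le_rfl) hi

theorem step_le_mesh {i : ℕ} (hi : i < P.n) : P.r (i + 1) - P.r i ≤ P.mesh :=
  (Real.le_coe_toNNReal _).trans <| NNReal.coe_le_coe.2 <|
    Finset.le_sup (f := fun i => (P.r (i + 1) - P.r i).toNNReal) (Finset.mem_range.2 hi)

theorem sum_step {G : Type*} [AddCommGroup G] (f : ℝ → G) :
    ∑ i ∈ Finset.range P.n, (f (P.r (i + 1)) - f (P.r i)) = f t - f s := by
  rw [Finset.sum_range_sub fun i => f (P.r i), P.first, P.last]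

end YoungPartition

namespace IsDavieSolution

variable {E : Type*} [NormedAddCommGroup E] {A : ℝ → E → E} {Y : ℝ → E} {T θ c : ℝ}

theorem norm_sub_youngRiemannSum_le (hY : IsDavieSolution A T θ c Y) (hθ : 1 ≤ θ) (hc : 0 ≤ c)
    {s t : ℝ} (hs : 0 ≤ s) (ht : t ≤ T) (P : YoungPartition s t) :
    ‖Y t - Y s - youngRiemannSum A Y P‖ ≤ c * P.mesh ^ (θ - 1) * (t - s) := by
  have hstep {i : ℕ} (hi : i < P.n) :
      ‖eulerDefect A (P.r i) (P.r (i + 1)) (Y (P.r i)) (Y (P.r (i + 1)))‖ ≤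
        c * P.mesh ^ (θ - 1) * (P.r (i + 1) - P.r i) := by
    have hpos : 0 < P.r (i + 1) - P.r i := sub_pos.2 (P.strict i hi)
    calc ‖eulerDefect A (P.r i) (P.r (i + 1)) (Y (P.r i)) (Y (P.r (i + 1)))‖
        ≤ c * (P.r (i + 1) - P.r i) ^ θ :=
          hY (hs.trans (P.le_r hi.le)) (P.strict i hi).le ((P.r_le hi).trans ht)
      _ = c * (P.r (i + 1) - P.r i) ^ (θ - 1) * (P.r (i + 1) - P.r i) := by
          rw [mul_assoc, ← Real.rpow_add_one hpos.ne', sub_add_cancel]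
      _ ≤ c * P.mesh ^ (θ - 1) * (P.r (i + 1) - P.r i) := by
          have := P.step_le_mesh hi
          gcongr
  rw [youngRiemannSum, ← P.sum_step Y, ← Finset.sum_sub_distrib]
  refine (norm_sum_le_of_le _ fun i hi => hstep (Finset.mem_range.1 hi)).trans_eq ?_
  rw [← Finset.mul_sum, P.sum_step fun r => r]

theorem tendsto_youngRiemannSum (hY : IsDavieSolution A T θ c Y) (hθ : 1 < θ) (hc : 0 ≤ c)
    {s t : ℝ} (hs : 0 ≤ s) (ht : t ≤ T) {ι : Type*} {l : Filter ι} {P : ι → YoungPartition s t}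
    (hP : Tendsto (fun k => (P k).mesh) l (𝓝 0)) :
    Tendsto (fun k => youngRiemannSum A Y (P k)) l (𝓝 (Y t - Y s)) := by
  have hmesh : Tendsto (fun k => c * (P k).mesh ^ (θ - 1) * (t - s)) l (𝓝 0) := by
    simpa [(sub_pos.2 hθ).ne'] using
      ((hP.rpow_const (Or.inr (sub_nonneg.2 hθ.le))).const_mul c).mul_const (t - s)
  rw [tendsto_iff_norm_sub_tendsto_zero]
  refine squeeze_zero (fun _ => norm_nonneg _) (fun k => ?_) hmesh
  rw [norm_sub_rev]
  exact hY.norm_sub_youngRiemannSum_le hθ.le hc hs ht (P k)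

end IsDavieSolution

end RiemannSums

theorem exists_nonneg_add_mul_rpow_le {γ : ℝ} (hγ : γ < 1) (a b : ℝ) :
    ∃ N : ℝ, 0 ≤ N ∧ a + b * N ^ γ ≤ N := by
  have hgrowth : ∀ᶠ N : ℝ in atTop, 2 * b ≤ N ^ (1 - γ) :=
    (tendsto_rpow_atTop (sub_pos.2 hγ)).eventually_ge_atTop (2 * b)
  obtain ⟨N, hb, ha, hN⟩ :=
    (hgrowth.and ((eventually_ge_atTop (2 * a)).and (eventually_gt_atTop 0))).exists
  have hsplit : N ^ (1 - γ) * N ^ γ = N := by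
    rw [← Real.rpow_add hN, sub_add_cancel, Real.rpow_one]
  have hbN : 2 * b * N ^ γ ≤ N ^ (1 - γ) * N ^ γ := by gcongr
  exact ⟨N, hN.le, by linarith⟩

theorem youngODE_exists_general {E : Type*} [NormedAddCommGroup E] [ProperSpace E]
    {T β γ K M : ℝ} (hT : 0 ≤ T) (hγ0 : 0 < γ) (hγ1 : γ < 1) (hβγ : 1 < β * (1 + γ))
    (hK : 0 ≤ K) :
    ∃ C : ℝ, ∀ A : ℝ → E → E, IsYoungField A T β γ K M → ∀ y₀ : E,
      ∃ (Y : ℝ → E) (KY : ℝ),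
        Y 0 = y₀ ∧
        (∀ s ∈ Set.Icc 0 T, ∀ t ∈ Set.Icc 0 T, ‖Y t - Y s‖ ≤ KY * |t - s| ^ β) ∧
        (∀ t ∈ Set.Icc 0 T, ∀ P : ℕ → YoungPartition 0 t,
          Tendsto (fun k => (P k).mesh) atTop (𝓝 0) →
          Tendsto (fun k => youngRiemannSum A Y (P k)) atTop (𝓝 (Y t - y₀))) ∧
        (∀ t ∈ Set.Icc 0 T, ‖Y t‖ + KY ≤ C * (‖y₀‖ + 1)) := by
  have hβ : 0 < β := by nlinarith
  have hS := sewingConstant_nonneg hβγ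
  obtain ⟨N, hN, hMN⟩ := exists_nonneg_add_mul_rpow_le hγ1 M
    (sewingConstant (β * (1 + γ)) * K * T ^ (β * γ))
  refine ⟨N * T ^ β + N + 1, fun A hA y₀ => ?_⟩
  obtain ⟨Y, rfl, hY⟩ := hA.exists_isDavieSolution hT hβ hγ0 hβγ hK hN (by linarith) y₀
  have hHolder : ∀ s ∈ Set.Icc 0 T, ∀ t ∈ Set.Icc 0 T, ‖Y t - Y s‖ ≤ N * |t - s| ^ β :=
    fun s hs t ht => (hA.norm_sub_le_of_isDavieSolution hβ.le hγ0.le (by positivity) hY hs ht).trans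
      (by gcongr; linarith)
  refine ⟨Y, N, rfl, hHolder, fun t ht P hP =>
    hY.tendsto_youngRiemannSum hβγ (by positivity) le_rfl ht.2 hP, fun t ht => ?_⟩
  have hsup : ‖Y t - Y 0‖ ≤ N * T ^ β := by
    refine (hHolder 0 ⟨le_rfl, hT⟩ t ht).trans ?_
    rw [sub_zero, abs_of_nonneg ht.1]
    gcongr
    exacts [ht.1, ht.2]
  have hprod : 0 ≤ (N * T ^ β + N) * ‖Y 0‖ := by positivity
  linarith [norm_le_norm_sub_add (Y t) (Y 0)]

/-- **Existence for the nonlinear Young differential equation** `Y_t = y₀ + ∫_0^t A_{ds}(Y_s)`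
in `ℝ^d`.  Let `β ∈ (1/2,1]`, `γ ∈ [0,1)` with `β(1+γ) > 1`.  There is a constant `C`,
depending only on `β, γ, T` and the bounds `KA ≥ ‖A‖_{β,γ}`, `MA ≥ M(A)`, such that for every
field `A` satisfying these bounds and every initial datum `y₀` there is a `β`-Hölder path `Y`
with `Y 0 = y₀` solving the equation (the Riemann sums over partitions of `[0,t]` converge to
`Y_t − y₀` as the mesh tends to `0`) and satisfying
`sup_{[0,T]} |Y| + ‖Y‖_{C^β} ≤ C (|y₀| + 1)`. -/
theorem youngODE_exists
    (d : ℕ) (hd : 1 ≤ d) (T β γ KA MA : ℝ) (hT : 0 < T)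
    (hβ : 1 / 2 < β) (hβ1 : β ≤ 1) (hγ0 : 0 ≤ γ) (hγ1 : γ < 1)
    (hβγ : 1 < β * (1 + γ)) (hKA : 0 ≤ KA) (hMA : 0 ≤ MA) :
    ∃ C : ℝ,
      ∀ A : ℝ → EuclideanSpace ℝ (Fin d) → EuclideanSpace ℝ (Fin d),
      (∀ s ∈ Set.Icc (0 : ℝ) T, ∀ t ∈ Set.Icc (0 : ℝ) T, ∀ x y : EuclideanSpace ℝ (Fin d),
        ‖(A t x - A s x) - (A t y - A s y)‖ ≤ KA * |t - s| ^ β * ‖x - y‖ ^ γ) →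
      (∀ s ∈ Set.Icc (0 : ℝ) T, ∀ t ∈ Set.Icc (0 : ℝ) T, ∀ x : EuclideanSpace ℝ (Fin d),
        ‖A t x - A s x‖ ≤ MA * |t - s| ^ β) →
      ∀ y₀ : EuclideanSpace ℝ (Fin d),
      ∃ (Y : ℝ → EuclideanSpace ℝ (Fin d)) (KY : ℝ),
        Y 0 = y₀ ∧
        (∀ s ∈ Set.Icc (0 : ℝ) T, ∀ t ∈ Set.Icc (0 : ℝ) T, ‖Y t - Y s‖ ≤ KY * |t - s| ^ β) ∧
        (∀ t ∈ Set.Icc (0 : ℝ) T, ∀ P : ℕ → YoungPartition 0 t,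
          Tendsto (fun k => (P k).mesh) atTop (𝓝 0) →
          Tendsto (fun k => youngRiemannSum A Y (P k)) atTop (𝓝 (Y t - y₀))) ∧
        (∀ t ∈ Set.Icc (0 : ℝ) T, ‖Y t‖ + KY ≤ C * (‖y₀‖ + 1)) := by
  have hγ : 0 < γ := by nlinarith
  obtain ⟨C, hC⟩ := youngODE_exists_general
    (E := EuclideanSpace ℝ (Fin d)) (M := MA) hT.le hγ hγ1 hβγ hKA
  exact ⟨C, fun A hA₁ hA₂ => hC A ⟨hA₁, hA₂⟩⟩
end

section
/- Let H ∈ (0,1) and T > 0. For N ∈ ℕ, N ≥ 1, set t_i := iT/N for i = 0, …, N, and define S_N := Σ_{i=0}^{N−1} ∫_{t_i}^{t_{i+1}} ( | ∫_{t_{i+1}}^T ( (s−u)^{H−1/2} − (s−t_i)^{H−1/2} ) ds |² + | ∫_{t_i}^{t_{i+1}} (s−t_i)^{H−1/2} ds |² ) du. Then lim_{N→∞} S_N = 0. -/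
open Filter Topology

/-!
Translating both integrands by `u` and `a` and swapping endpoints gives
`∫_b^T (k (s - u) - k (s - a)) ds = ∫_{b-u}^{b-a} k - ∫_{T-u}^{T-a} k`, which for `a ≤ u ≤ b` is a
difference of two integrals of `k` over intervals no longer than the mesh; likewise
`∫_a^b k (s - a) ds = ∫_0^{b-a} k` is one such integral. Integrals of an integrable `k` over short
intervals are uniformly small, say at most `ε`, so a cell `[a, b]` contributes at most
`((2 * ε) ^ 2 + ε ^ 2) * (b - a)`, and the lengths `b - a` add up to at most `T`.
-/

open MeasureTheory Set

section

variable {E : Type*} [NormedAddCommGroup E] [NormedSpace ℝ E]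

lemma exists_pos_forall_norm_intervalIntegral_lt {μ : Measure ℝ} [NullSingletonClass μ]
    {f : ℝ → E} {a b ε : ℝ} (hf : IntervalIntegrable f μ a b) (hε : 0 < ε) :
    ∃ δ > 0, ∀ x ∈ uIcc a b, ∀ y ∈ uIcc a b, |x - y| < δ → ‖∫ t in x..y, f t ∂μ‖ < ε := by
  have hcont : ContinuousOn (fun x ↦ ∫ t in a..x, f t ∂μ) (uIcc a b) :=
    intervalIntegral.continuousOn_primitive_interval' hf left_mem_uIcc
  have hint : ∀ x ∈ uIcc a b, IntervalIntegrable f μ a x := fun x hx ↦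
    hf.mono_set (uIcc_subset_uIcc_left hx)
  obtain ⟨δ, hδ, h⟩ := Metric.uniformContinuousOn_iff.1
    (isCompact_uIcc.uniformContinuousOn_of_continuous hcont) ε hε
  refine ⟨δ, hδ, fun x hx y hy hxy ↦ ?_⟩
  rw [← intervalIntegral.integral_interval_sub_left (hint y hy) (hint x hx), ← dist_eq_norm']
  exact h x hx y hy hxy

lemma integral_comp_sub_right_sub_comp_sub_right {f : ℝ → E} {a b c u : ℝ}
    (hu : IntervalIntegrable f volume (b - u) (c - u))
    (ha : IntervalIntegrable f volume (b - a) (c - a))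
    (hua : IntervalIntegrable f volume (b - u) (b - a)) :
    ∫ s in b..c, (f (s - u) - f (s - a)) =
      (∫ s in (b - u)..(b - a), f s) - ∫ s in (c - u)..(c - a), f s := by
  rw [intervalIntegral.integral_sub (by simpa using hu.comp_sub_right u)
      (by simpa using ha.comp_sub_right a),
    intervalIntegral.integral_comp_sub_right, intervalIntegral.integral_comp_sub_right,
    intervalIntegral.integral_interval_sub_interval_comm hu ha hua]

/-- The contribution of the cell `[a, b]` of a partition of `[0, T]` to the squared error of the
Riemann-sum approximation of a stochastic integral with convolution kernel `k`. -/
noncomputable def volterraCellError (k : ℝ → E) (T a b : ℝ) : ℝ :=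
  ∫ u in a..b, (‖∫ s in b..T, (k (s - u) - k (s - a))‖ ^ 2 + ‖∫ s in a..b, k (s - a)‖ ^ 2)

lemma volterraCellError_nonneg (k : ℝ → E) (T : ℝ) {a b : ℝ} (hab : a ≤ b) :
    0 ≤ volterraCellError k T a b :=
  intervalIntegral.integral_nonneg hab fun _ _ ↦ by positivity

variable {k : ℝ → E} {T δ ε : ℝ}

lemma volterraCellError_le {a b : ℝ} (hk : IntervalIntegrable k volume 0 T)
    (hsmall : ∀ x ∈ uIcc 0 T, ∀ y ∈ uIcc 0 T, |x - y| < δ → ‖∫ t in x..y, k t‖ < ε)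
    (ha : 0 ≤ a) (hab : a ≤ b) (hbT : b ≤ T) (hδ : b - a < δ) :
    volterraCellError k T a b ≤ 5 * ε ^ 2 * (b - a) := by
  have mem {x y : ℝ} (hy : 0 ≤ y) (hyx : y ≤ x) (hx : x ≤ T) : x - y ∈ uIcc 0 T :=
    mem_uIcc_of_le (by linarith) (by linarith)
  have integrable {x y : ℝ} (hx : x ∈ uIcc 0 T) (hy : y ∈ uIcc 0 T) :
      IntervalIntegrable k volume x y := hk.mono_set (uIcc_subset_uIcc hx hy)
  have hba := mem ha hab hbT
  have hTa := mem ha (hab.trans hbT) le_rfl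
  have hdiag : ‖∫ s in a..b, k (s - a)‖ ≤ ε := by
    rw [intervalIntegral.integral_comp_sub_right, sub_self]
    exact (hsmall 0 left_mem_uIcc _ hba (by rw [abs_lt]; constructor <;> linarith)).le
  have htail : ∀ u ∈ Icc a b, ‖∫ s in b..T, (k (s - u) - k (s - a))‖ ≤ 2 * ε := by
    intro u ⟨hau, hub⟩
    have hbu := mem (ha.trans hau) hub hbT
    have hTu := mem (ha.trans hau) (hub.trans hbT) le_rfl
    have hshift (x : ℝ) : |(x - u) - (x - a)| < δ := by rw [abs_lt]; constructor <;> linarith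
    rw [integral_comp_sub_right_sub_comp_sub_right (integrable hbu hTu) (integrable hba hTa)
      (integrable hbu hba)]
    calc _ ≤ ‖∫ s in (b - u)..(b - a), k s‖ + ‖∫ s in (T - u)..(T - a), k s‖ := norm_sub_le _ _
      _ ≤ ε + ε := add_le_add (hsmall _ hbu _ hba (hshift b)).le (hsmall _ hTu _ hTa (hshift T)).le
      _ = 2 * ε := (two_mul ε).symm
  rw [← abs_of_nonneg (sub_nonneg.2 hab)]
  refine (Real.le_norm_self _).trans (intervalIntegral.norm_integral_le_of_norm_le_const ?_)
  intro u hu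
  rw [uIoc_of_le hab] at hu
  rw [Real.norm_of_nonneg (by positivity)]
  calc _ ≤ (2 * ε) ^ 2 + ε ^ 2 := by gcongr; exact htail u (Ioc_subset_Icc_self hu)
    _ = 5 * ε ^ 2 := by ring

lemma sum_volterraCellError_le {t : ℕ → ℝ} {n : ℕ} (hk : IntervalIntegrable k volume 0 T)
    (hsmall : ∀ x ∈ uIcc 0 T, ∀ y ∈ uIcc 0 T, |x - y| < δ → ‖∫ t in x..y, k t‖ < ε)
    (ht : Monotone t) (ht0 : 0 ≤ t 0) (htn : t n ≤ T) (hδ : ∀ i < n, t (i + 1) - t i < δ) :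
    ∑ i ∈ Finset.range n, volterraCellError k T (t i) (t (i + 1)) ≤ 5 * ε ^ 2 * T := by
  calc _ ≤ ∑ i ∈ Finset.range n, 5 * ε ^ 2 * (t (i + 1) - t i) := by
        refine Finset.sum_le_sum fun i hi ↦ ?_
        rw [Finset.mem_range] at hi
        exact volterraCellError_le hk hsmall (ht0.trans (ht i.zero_le)) (ht i.le_succ)
          ((ht hi).trans htn) (hδ i hi)
    _ = 5 * ε ^ 2 * (t n - t 0) := by rw [← Finset.mul_sum, Finset.sum_range_sub]
    _ ≤ 5 * ε ^ 2 * T := by gcongr; linarith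

theorem fractional_kernel_riemann_error_tendsto_zero_general {ι : Type*} {l : Filter ι}
    {t : ι → ℕ → ℝ} {n : ι → ℕ} {mesh : ι → ℝ} (hk : IntervalIntegrable k volume 0 T)
    (ht : ∀ j, Monotone (t j)) (ht0 : ∀ j, 0 ≤ t j 0) (htn : ∀ j, t j (n j) ≤ T)
    (hmesh : ∀ j, ∀ i < n j, t j (i + 1) - t j i ≤ mesh j) (hlim : Tendsto mesh l (𝓝 0)) :
    Tendsto (fun j ↦ ∑ i ∈ Finset.range (n j), volterraCellError k T (t j i) (t j (i + 1)))
      l (𝓝 0) := by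
  refine tendsto_order.2 ⟨fun c hc ↦ .of_forall fun j ↦ hc.trans_le <|
    Finset.sum_nonneg fun i _ ↦ volterraCellError_nonneg k T (ht j i.le_succ), fun c hc ↦ ?_⟩
  have hbound : Tendsto (fun ε : ℝ ↦ 5 * ε ^ 2 * T) (𝓝[>] 0) (𝓝 0) :=
    tendsto_nhdsWithin_of_tendsto_nhds <| Continuous.tendsto' (by fun_prop) _ _ (by simp)
  obtain ⟨ε, hεc, hε⟩ := ((hbound.eventually_lt_const hc).and self_mem_nhdsWithin).exists
  obtain ⟨δ, hδ, hsmall⟩ := exists_pos_forall_norm_intervalIntegral_lt hk hε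
  filter_upwards [hlim.eventually_lt_const hδ] with j hj
  exact (sum_volterraCellError_le hk hsmall (ht j) (ht0 j) (htn j)
    fun i hi ↦ (hmesh j i hi).trans_lt hj).trans_lt hεc

lemma tendsto_sum_volterraCellError_uniform_grid (hk : IntervalIntegrable k volume 0 T)
    (hT : 0 ≤ T) :
    Tendsto (fun N : ℕ ↦ ∑ i ∈ Finset.range N, volterraCellError k T (i * T / N) ((i + 1) * T / N))
      atTop (𝓝 0) := by
  have hmono (N : ℕ) : Monotone fun i : ℕ ↦ (i : ℝ) * T / N := fun i j hij ↦ by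
    dsimp only
    gcongr
  have hlast (N : ℕ) : (N : ℝ) * T / N ≤ T :=
    div_le_of_le_mul₀ N.cast_nonneg hT (mul_comm _ _).le
  have hwidth (N i : ℕ) : ((i + 1 : ℕ) : ℝ) * T / N - i * T / N ≤ T / N := by
    push_cast
    exact le_of_eq (by ring)
  simpa only [Nat.cast_add_one] using
    fractional_kernel_riemann_error_tendsto_zero_general (n := fun N : ℕ ↦ N) hk hmono
      (fun N ↦ by simp) hlast (fun N i _ ↦ hwidth N i) (tendsto_const_div_atTop_nhds_zero_nat T)

end

/-- **Vanishing of the Riemann-sum error for the fractional Volterra kernel.**  For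
`H ∈ (0,1)`, `T > 0` and the uniform grid `t_i = iT/N`, the quantity
`S_N = Σ_{i<N} ∫_{t_i}^{t_{i+1}} ( |∫_{t_{i+1}}^T ((s−u)^{H−1/2} − (s−t_i)^{H−1/2}) ds|²
 + |∫_{t_i}^{t_{i+1}} (s−t_i)^{H−1/2} ds|² ) du` tends to `0` as `N → ∞`. -/
theorem fractional_kernel_riemann_error_tendsto_zero
    (H T : ℝ) (hH0 : 0 < H) (hH1 : H < 1) (hT : 0 < T) :
    Tendsto (fun N : ℕ =>
      ∑ i ∈ Finset.range N,
        ∫ u in ((i : ℝ) * T / N)..(((i : ℝ) + 1) * T / N),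
          (|∫ s in (((i : ℝ) + 1) * T / N)..T,
              ((s - u) ^ (H - 1 / 2) - (s - (i : ℝ) * T / N) ^ (H - 1 / 2))| ^ 2 +
           |∫ s in ((i : ℝ) * T / N)..(((i : ℝ) + 1) * T / N),
              (s - (i : ℝ) * T / N) ^ (H - 1 / 2)| ^ 2))
      atTop (𝓝 0) := by
  simpa only [volterraCellError, Real.norm_eq_abs] using
    tendsto_sum_volterraCellError_uniform_grid
      (intervalIntegral.intervalIntegrable_rpow' (by linarith : -1 < H - 1 / 2)) hT.le
end
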